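/- arXiv:1912.00135 — 2 statements merged into one kernel-verified Lean document; each statement's English description precedes it below -/
import Mathlib

section
/- Let N ≥ 2 be an integer and q ∈ (1, ∞). There exists a constant C = C(N, q) > 0 such that for every ε > 0 and every Schwartz vector field F ∈ 𝓢(ℝ^N; ℂ^N), the function U^ε(x) = −(2π)^{−N} ∫_{ℝ^N ∖ {0}} e^{i x·ξ} e^{−ε‖ξ‖²} (i ξ · 𝓕F(ξ)) / ‖ξ‖² dξ is well defined (the integrand is absolutely integrable) and smooth, and satisfies ‖∇U^ε‖_{L^q(ℝ^N)} ≤ C ‖F‖_{L^q(ℝ^N)} and ‖D²U^ε‖_{L^q(ℝ^N)} ≤ C ‖div F‖_{L^q(ℝ^N)}, with C independent of ε and F. -/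
open Real MeasureTheory
open scoped RealInnerProductSpace

/-- The `L^p` norm (real exponent `p`) of `f` with respect to the measure `μ`. -/
noncomputable def LqNorm {α : Type*} [MeasurableSpace α] {E : Type*} [NormedAddCommGroup E]
    (μ : Measure α) (p : ℝ) (f : α → E) : ℝ :=
  (∫ x, ‖f x‖ ^ p ∂μ) ^ (1 / p)


noncomputable def bRho (a κ x y : ℝ) : ℝ := (x^2)^a + y^2 + κ^2
noncomputable def bB (A q a κ x y : ℝ) : ℝ :=
  A * ((y^2+κ^2)^(q/2) - (κ^2)^(q/2)) + x^2 * (bRho a κ x y)^((2-q)/2)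
noncomputable def bP (q a κ x y : ℝ) : ℝ :=
  2 * (bRho a κ x y)^((2-q)/2) + a*(2-q) * (x^2)^a * (bRho a κ x y)^((2-q)/2-1)
noncomputable def bQ (A q a κ x y : ℝ) : ℝ :=
  A * q * (y^2+κ^2)^(q/2-1) + (2-q) * x^2 * (bRho a κ x y)^((2-q)/2-1)
noncomputable def bXX (q a κ x y : ℝ) : ℝ :=
  2 * (bRho a κ x y)^((2-q)/2) + (6*a+4*a^2)*((2-q)/2) * (x^2)^a * (bRho a κ x y)^((2-q)/2-1)
   + 4*a^2*((2-q)/2)*((2-q)/2-1)*((x^2)^a)^2 * (bRho a κ x y)^((2-q)/2-2)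
noncomputable def bXY (q a κ x y : ℝ) : ℝ :=
  4*((2-q)/2)*x*y*(bRho a κ x y)^((2-q)/2-1)
   + 4*a*((2-q)/2)*((2-q)/2-1)*x*y*(x^2)^a * (bRho a κ x y)^((2-q)/2-2)
noncomputable def bYY (A q a κ x y : ℝ) : ℝ :=
  A * q * (y^2+κ^2)^(q/2-1) + A*q*(q-2)*y^2*(y^2+κ^2)^(q/2-2)
   + 2*((2-q)/2)*x^2*(bRho a κ x y)^((2-q)/2-1)
   + 4*((2-q)/2)*((2-q)/2-1)*x^2*y^2*(bRho a κ x y)^((2-q)/2-2)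

lemma bRho_pos {a κ : ℝ} (hκ : 0 < κ) (x y : ℝ) : 0 < bRho a κ x y := by
  unfold bRho; positivity

lemma b_pow1 {r : ℝ} (hr : 0 < r) (s : ℝ) : r^(s-1) = r * r^(s-2) := by
  rw [show s - 1 = 1 + (s-2) by ring, Real.rpow_add hr, Real.rpow_one]
lemma b_pow0 {r : ℝ} (hr : 0 < r) (s : ℝ) : r^s = r^2 * r^(s-2) := by
  rw [show s = 2 + (s-2) by ring, Real.rpow_add hr, Real.rpow_two]; ring_nf

lemma b_m {a : ℝ} (ha : 1 ≤ a) (x : ℝ) : (x^2)^a = x^2 * (x^2)^(a-1) := by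
  rcases eq_or_ne x 0 with rfl | h
  · simp; rw [Real.zero_rpow (by linarith)]
  · have : 0 < x^2 := by positivity
    rw [show a = 1 + (a-1) by ring, Real.rpow_add this, Real.rpow_one]; ring_nf

lemma bRho_deriv {a κ : ℝ} (ha : 1 ≤ a) {u v : ℝ → ℝ} {u' v' t : ℝ}
    (hu : HasDerivAt u u' t) (hv : HasDerivAt v v' t) :
    HasDerivAt (fun s => bRho a κ (u s) (v s))
      (2 * u t * u' * a * ((u t)^2)^(a-1) + 2 * v t * v') t := by
  unfold bRho
  have h1 := (hu.pow 2).rpow_const (p := a) (Or.inr ha)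
  have h2 := (h1.add (hv.pow 2)).add_const (κ^2)
  refine HasDerivAt.congr_deriv h2 ?_
  simp 

lemma bY_deriv {κ : ℝ} (hκ : 0 < κ) (p : ℝ) {v : ℝ → ℝ} {v' t : ℝ}
    (hv : HasDerivAt v v' t) :
    HasDerivAt (fun s => ((v s)^2+κ^2)^p) (2 * v t * v' * p * ((v t)^2+κ^2)^(p-1)) t := by
  have h2 := ((hv.pow 2).add_const (κ^2)).rpow_const (p := p) (Or.inl (by simp; positivity))
  refine HasDerivAt.congr_deriv h2 ?_
  simp 

lemma bB_deriv {A q a κ : ℝ} (hκ : 0 < κ) (ha : 1 ≤ a) {u v : ℝ → ℝ} {u' v' t : ℝ}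
    (hu : HasDerivAt u u' t) (hv : HasDerivAt v v' t) :
    HasDerivAt (fun s => bB A q a κ (u s) (v s))
      (u t * bP q a κ (u t) (v t) * u' + v t * bQ A q a κ (u t) (v t) * v') t := by
  unfold bB
  have hr := bRho_pos (a := a) hκ (u t) (v t)
  have hρ := (bRho_deriv (κ := κ) ha hu hv).rpow_const (p := (2-q)/2) (Or.inl hr.ne')
  have h := (((bY_deriv hκ (q/2) hv).sub_const ((κ^2)^(q/2))).const_mul A).add ((hu.pow 2).mul hρ)
  refine HasDerivAt.congr_deriv h ?_
  unfold bP bQ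
  rw [b_m ha]
  simp
  ring

lemma bX_deriv {q a κ : ℝ} (hκ : 0 < κ) (ha : 1 ≤ a) {u v : ℝ → ℝ} {u' v' t : ℝ}
    (hu : HasDerivAt u u' t) (hv : HasDerivAt v v' t) :
    HasDerivAt (fun s => u s * bP q a κ (u s) (v s))
      (bXX q a κ (u t) (v t) * u' + bXY q a κ (u t) (v t) * v') t := by
  unfold bP
  have hr := bRho_pos (a := a) hκ (u t) (v t)
  have hρ := bRho_deriv (κ := κ) ha hu hv
  have hρ1 := hρ.rpow_const (p := (2-q)/2) (Or.inl hr.ne')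
  have hρ2 := hρ.rpow_const (p := (2-q)/2-1) (Or.inl hr.ne')
  have h1 := (hu.pow 2).rpow_const (p := a) (Or.inr ha)
  have h := hu.mul ((hρ1.const_mul 2).add ((h1.const_mul (a*(2-q))).mul hρ2))
  refine HasDerivAt.congr_deriv h ?_
  unfold bXX bXY
  simp
  rw [show (2-q)/2-1-1 = (2-q)/2-2 by ring, b_pow0 hr ((2-q)/2), b_pow1 hr ((2-q)/2), b_m ha]
  generalize ((u t)^2)^(a-1) = M
  generalize (bRho a κ (u t) (v t))^((2-q)/2-2) = R
  ring

lemma bY_deriv' {A q a κ : ℝ} (hκ : 0 < κ) (ha : 1 ≤ a) {u v : ℝ → ℝ} {u' v' t : ℝ}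
    (hu : HasDerivAt u u' t) (hv : HasDerivAt v v' t) :
    HasDerivAt (fun s => v s * bQ A q a κ (u s) (v s))
      (bXY q a κ (u t) (v t) * u' + bYY A q a κ (u t) (v t) * v') t := by
  unfold bQ
  have hr := bRho_pos (a := a) hκ (u t) (v t)
  have hρ := bRho_deriv (κ := κ) ha hu hv
  have hρ2 := hρ.rpow_const (p := (2-q)/2-1) (Or.inl hr.ne')
  have h := hv.mul (((bY_deriv hκ (q/2-1) hv).const_mul (A*q)).add
    (((hu.pow 2).const_mul (2-q)).mul hρ2))
  refine HasDerivAt.congr_deriv h ?_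
  unfold bXY bYY
  simp
  rw [show (2-q)/2-1-1 = (2-q)/2-2 by ring, show q/2-1-1 = q/2-2 by ring, b_m ha]
  generalize ((u t)^2)^(a-1) = M
  generalize (bRho a κ (u t) (v t))^((2-q)/2-2) = R
  ring


lemma b_x_le {q a κ : ℝ} (hq : 1 < q) (ha : a = 1/(q-1)) (x y : ℝ) :
    x^2 ≤ (bRho a κ x y)^(q-1) := by
  have h1 : x^2 = ((x^2)^a)^(q-1) := by
    rw [← Real.rpow_mul (by positivity), ha, one_div_mul_cancel (by linarith), Real.rpow_one]
  rw [h1]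
  have : 0 ≤ (x^2)^a := by positivity
  rw [← h1]
  conv_lhs => rw [h1]
  apply Real.rpow_le_rpow this _ (by linarith)
  unfold bRho
  nlinarith [sq_nonneg y, sq_nonneg κ]

set_option maxHeartbeats 1000000 in
lemma b_hess {A q a κ : ℝ} (hκ : 0 < κ) (hq : 1 < q) (hq2 : q ≤ 2) (ha : a = 1/(q-1))
    (hA : 1 + 16*a^2*((2-q)/2)^2 + (2-q) ≤ A*(q*(q-1))) (x y d e : ℝ) :
    (bRho a κ x y)^((2-q)/2) * d^2 + ((bRho a κ x y)^((2-q)/2))⁻¹ * e^2 ≤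
      bXX q a κ x y * d^2 + 2 * bXY q a κ x y * d * e + bYY A q a κ x y * e^2 := by
  have ha1 : 1 ≤ a := by
    rw [ha, le_div_iff₀ (by linarith)]; linarith
  have hA0 : 0 ≤ A := by
    by_contra h
    push Not at h
    have : A*(q*(q-1)) ≤ 0 := mul_nonpos_of_nonpos_of_nonneg h.le (by nlinarith)
    nlinarith [sq_nonneg (a*((2-q)/2))]
  have hr := bRho_pos (a := a) hκ x y
  have hxle := b_x_le (κ := κ) hq ha x y
  unfold bXX bXY bYY
  have hm0 : 0 ≤ (x^2)^a := by positivity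
  have hmρ : (x^2)^a ≤ bRho a κ x y := by
    unfold bRho; nlinarith [sq_nonneg y, sq_nonneg κ]
  have hyρ : y^2 + κ^2 ≤ bRho a κ x y := by
    unfold bRho; nlinarith
  have hY : 0 < y^2 + κ^2 := by positivity
  generalize hρ : bRho a κ x y = ρ at *
  generalize hmm : (x^2)^a = m at *
  obtain ⟨σ, hσ⟩ : ∃ σ, σ = (2-q)/2 := ⟨_, rfl⟩
  have hσ0 : 0 ≤ σ := by rw [hσ]; linarith
  have hσ1 : σ ≤ 1/2 := by rw [hσ]; linarith
  have hqσ : q = 2 - 2*σ := by rw [hσ]; ring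
  rw [← hσ] at *
  have hS : 0 < ρ^σ := by positivity
  have hR : 0 < ρ^(σ-2) := by positivity
  have e1 := b_pow1 hr σ
  have e0 := b_pow0 hr σ
  -- XX
  have hXX : 2*ρ^σ ≤ 2 * ρ^σ + (6*a+4*a^2)*σ * m * ρ^(σ-1)
      + 4*a^2*σ*(σ-1)*m^2 * ρ^(σ-2) := by
    rw [e1]
    have : 0 ≤ σ * m * ρ^(σ-2) * ((6*a+4*a^2)*ρ - 4*a^2*(1-σ)*m) := by
      apply mul_nonneg (by positivity)
      have h1 : 4*a^2*((1-σ)*m) ≤ 4*a^2*ρ := by gcongr; nlinarith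
      nlinarith
    nlinarith
  -- x y ρ^(σ-1)
  have hxy : |x*y*ρ^(σ-1)| ≤ 1 := by
    rw [← sq_le_one_iff_abs_le_one]
    have h1 : (x*y*ρ^(σ-1))^2 = x^2*y^2*(ρ^(σ-1))^2 := by ring
    have h2 : x^2*y^2 ≤ ρ^(q-1) * ρ := by
      gcongr; nlinarith
    have h3 : ρ^(q-1)*ρ*(ρ^(σ-1))^2 = 1 := by
      rw [← Real.rpow_add_one hr.ne', ← Real.rpow_mul_natCast hr.le, ← Real.rpow_add hr, hqσ]
      convert Real.rpow_zero ρ using 2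
      push_cast; ring
    rw [h1]
    refine le_trans ?_ h3.le
    gcongr
  have hXY : |4*σ*x*y*ρ^(σ-1) + 4*a*σ*(σ-1)*x*y*m * ρ^(σ-2)| ≤ 4*a*σ := by
    have h1 : 4*σ*x*y*ρ^(σ-1) + 4*a*σ*(σ-1)*x*y*m * ρ^(σ-2)
        = 4*σ*((x*y*ρ^(σ-1))*(1-(1-σ)*a*(m/ρ))) := by
      rw [e1]; field_simp; ring
    have hθ0 : 0 ≤ m/ρ := by positivity
    have hθ1 : m/ρ ≤ 1 := by rw [div_le_one hr]; exact hmρ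
    have h2 : |1-(1-σ)*a*(m/ρ)| ≤ a := by
      have h3 : 0 ≤ (1-σ)*a*(m/ρ) := by
        apply mul_nonneg (mul_nonneg (by linarith) (by linarith)) hθ0
      have h4 : (1-σ)*a*(m/ρ) ≤ 1*a*1 := by gcongr; linarith
      rw [abs_le]; constructor <;> linarith
    rw [h1, abs_mul (4*σ), abs_mul (x*y*_), abs_of_nonneg (by positivity : 0 ≤ 4*σ)]
    calc 4*σ*(|x*y*ρ^(σ-1)| * |1-(1-σ)*a*(m/ρ)|) ≤ 4*σ*(1*a) := by gcongr
      _ = 4*a*σ := by ring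
  have hYY : (A*(q*(q-1)) - 2*σ) * (ρ^σ)⁻¹ ≤
      A * q * (y^2+κ^2)^(q/2-1) + A*q*(q-2)*y^2*(y^2+κ^2)^(q/2-2)
      + 2*σ*x^2*ρ^(σ-1) + 4*σ*(σ-1)*x^2*y^2*ρ^(σ-2) := by
    have h1 : A*(q*(q-1))*(ρ^σ)⁻¹ ≤ A * q * (y^2+κ^2)^(q/2-1) + A*q*(q-2)*y^2*(y^2+κ^2)^(q/2-2) := by
      have h2 : (ρ^σ)⁻¹ ≤ (y^2+κ^2)^(q/2-1) := by
        rw [show q/2-1 = -σ by rw [hqσ]; ring, Real.rpow_neg hY.le]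
        gcongr
      rw [b_pow1 hY] at h2 ⊢
      have h3 : 0 < (y^2+κ^2)^(q/2-2) := by positivity
      have h4 : A*(q*(q-1))*(ρ^σ)⁻¹ ≤ A*(q*(q-1))*((y^2+κ^2)*(y^2+κ^2)^(q/2-2)) := by
        apply mul_le_mul_of_nonneg_left h2
        exact mul_nonneg hA0 (by nlinarith)
      have h5 : 0 ≤ A*q*(2-q)*κ^2*(y^2+κ^2)^(q/2-2) := by
        have : 0 ≤ 2 - q := by linarith
        positivity
      generalize (y^2+κ^2)^(q/2-2) = W at *
      have h6 : A * q * ((y^2+κ^2)*W) + A*q*(q-2)*y^2*W - A*(q*(q-1))*((y^2+κ^2)*W)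
          = A*q*(2-q)*κ^2*W := by ring
      linarith
    have h2 : -(2*σ*(ρ^σ)⁻¹) ≤ 2*σ*x^2*ρ^(σ-1) + 4*σ*(σ-1)*x^2*y^2*ρ^(σ-2) := by
      have h3 : x^2*ρ^(σ-1) ≤ (ρ^σ)⁻¹ := by
        rw [← Real.rpow_neg hr.le, show -σ = (q-1)+(σ-1) by rw [hqσ]; ring, Real.rpow_add hr]
        gcongr
      have h4 : 2*σ*(x^2*ρ^(σ-1)) ≤ 2*σ*(ρ^σ)⁻¹ := by gcongr
      rw [e1] at h4 ⊢
      have h5 : 0 ≤ σ*x^2*ρ^(σ-2)*(4*ρ - 4*(1-σ)*y^2) := by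
        apply mul_nonneg (by positivity)
        have hy2 : y^2 ≤ ρ := le_trans (le_add_of_nonneg_right (sq_nonneg κ)) hyρ
        have hy3 : 0 ≤ σ * y^2 := by positivity
        linarith
      have h6 : σ*x^2*ρ^(σ-2)*(4*ρ - 4*(1-σ)*y^2) = 4*σ*(x^2*(ρ*ρ^(σ-2)))
          + 4*σ*(σ-1)*x^2*y^2*ρ^(σ-2) := by ring
      have h7 : 2*σ*x^2*(ρ*ρ^(σ-2)) = 2*σ*(x^2*(ρ*ρ^(σ-2))) := by ring
      linarith
    linarith
  generalize 2 * ρ^σ + (6*a+4*a^2)*σ * m * ρ^(σ-1) + 4*a^2*σ*(σ-1)*m^2 * ρ^(σ-2) = XX at *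
  generalize 4*σ*x*y*ρ^(σ-1) + 4*a*σ*(σ-1)*x*y*m * ρ^(σ-2) = XY at *
  generalize A * q * (y^2+κ^2)^(q/2-1) + A*q*(q-2)*y^2*(y^2+κ^2)^(q/2-2)
      + 2*σ*x^2*ρ^(σ-1) + 4*σ*(σ-1)*x^2*y^2*ρ^(σ-2) = YY at *
  generalize ρ^σ = S at *
  have k1 : 2*S*d^2 ≤ XX*d^2 := by gcongr
  have k2 : (A*(q*(q-1)) - 2*σ) * S⁻¹ * e^2 ≤ YY*e^2 := by gcongr
  have k2' : (1 + 16*a^2*σ^2) * S⁻¹ * e^2 ≤ (A*(q*(q-1)) - 2*σ) * S⁻¹ * e^2 := by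
    have : 0 < S⁻¹ := by positivity
    have h9 : (2-q)/2 = σ := by rw [hqσ]; ring
    rw [h9] at hA
    gcongr
    linarith
  have k3 : -(4*a*σ*(|d| * |e|)) ≤ XY*d*e := by
    have : |XY*d*e| ≤ 4*a*σ*(|d| * |e|) := by
      rw [abs_mul, abs_mul, mul_assoc]; gcongr
    linarith [neg_abs_le (XY*d*e)]
  have k4 : 0 ≤ S*(|d| - 4*a*σ*S⁻¹*|e|)^2 := by positivity
  have k5 : S*(|d| - 4*a*σ*S⁻¹*|e|)^2 = S*d^2 - 8*a*σ*(|d| * |e|) + 16*a^2*σ^2*S⁻¹*e^2 := by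
    rw [← sq_abs d, ← sq_abs e]; field_simp; ring
  have k6 : 2*XY*d*e = 2*(XY*d*e) := by ring
  linarith

lemma b_hess_sum {ι : Type*} [Fintype ι] {A q a κ : ℝ} (hκ : 0 < κ) (hq : 1 < q) (hq2 : q ≤ 2)
    (ha : a = 1/(q-1))
    (hA : 1 + 16*a^2*((2-q)/2)^2 + (2-q) ≤ A*(q*(q-1))) (x y : ℝ) (d e : ι → ℝ) (i j : ι) :
    2 * (|d i| * |e j|) ≤ ∑ k,
      (bXX q a κ x y * (d k)^2 + 2 * bXY q a κ x y * d k * e k + bYY A q a κ x y * (e k)^2) := by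
  have hr := bRho_pos (a := a) hκ x y
  have h := Finset.sum_le_sum (fun k (_ : k ∈ Finset.univ) => b_hess hκ hq hq2 ha hA x y (d k) (e k))
  refine le_trans ?_ h
  have hS : 0 < (bRho a κ x y)^((2-q)/2) := by positivity
  generalize (bRho a κ x y)^((2-q)/2) = S at *
  rw [Finset.sum_add_distrib]
  have h1 : S * (d i)^2 ≤ ∑ k, S * (d k)^2 :=
    Finset.single_le_sum (f := fun k => S * (d k)^2) (fun k _ => by positivity) (Finset.mem_univ i)
  have h2 : S⁻¹ * (e j)^2 ≤ ∑ k, S⁻¹ * (e k)^2 :=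
    Finset.single_le_sum (f := fun k => S⁻¹ * (e k)^2) (fun k _ => by positivity) (Finset.mem_univ j)
  have k4 : 0 ≤ S*(|d i| - S⁻¹*|e j|)^2 := by positivity
  have k5 : S*(|d i| - S⁻¹*|e j|)^2 = S*(d i)^2 - 2*(|d i| * |e j|) + S⁻¹*(e j)^2 := by
    rw [← sq_abs (d i), ← sq_abs (e j)]; field_simp; ring
  linarith

lemma bB_nonneg {A q a κ : ℝ} (hA : 0 ≤ A) (hκ : 0 < κ) (hq : 1 < q) (x y : ℝ) :
    0 ≤ bB A q a κ x y := by
  unfold bB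
  have hr := bRho_pos (a := a) hκ x y
  have : (κ^2)^(q/2) ≤ (y^2+κ^2)^(q/2) := by
    apply Real.rpow_le_rpow (by positivity) (by nlinarith [sq_nonneg y]) (by linarith)
  have h2 : 0 ≤ (y^2+κ^2)^(q/2) - (κ^2)^(q/2) := by linarith
  positivity

lemma bB_le {A q a κ : ℝ} (hA : 0 ≤ A) (hκ : 0 < κ) (hq : 1 < q) (hq2 : q ≤ 2)
    (ha : a = 1/(q-1)) (x y : ℝ) :
    bB A q a κ x y ≤ (A+1) * |y|^q + 2 * |x|^(a+1) + (κ^2)^((2-q)/2) * x^2 := by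
  have ha1 : 1 ≤ a := by
    rw [ha, le_div_iff₀ (by linarith)]; linarith
  have haq : a*(q-1) = 1 := by rw [ha]; exact one_div_mul_cancel (by linarith)
  unfold bB bRho
  have h1 : (y^2+κ^2)^(q/2) ≤ |y|^q + (κ^2)^(q/2) := by
    refine (Real.rpow_add_le_add_rpow (by positivity) (by positivity) (by linarith) (by linarith)).trans ?_
    rw [← sq_abs y, ← Real.rpow_natCast_mul (abs_nonneg y)]
    apply le_of_eq; congr 2; push_cast; ring
  have h2 : ((x^2)^a + y^2 + κ^2)^((2-q)/2) ≤ |x|^(a-1) + |y|^(2-q) + (κ^2)^((2-q)/2) := by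
    refine (Real.rpow_add_le_add_rpow (by positivity) (by positivity) (by linarith) (by linarith)).trans ?_
    gcongr
    refine (Real.rpow_add_le_add_rpow (by positivity) (by positivity) (by linarith) (by linarith)).trans ?_
    rw [← Real.rpow_mul (by positivity), ← sq_abs y, ← sq_abs x, ← Real.rpow_natCast_mul (abs_nonneg y),
      ← Real.rpow_natCast_mul (abs_nonneg x)]
    apply le_of_eq; congr 2
    · push_cast; linear_combination -haq
    · push_cast; ring
  have h3 : x^2 * |x|^(a-1) = |x|^(a+1) := by
    rw [← sq_abs, ← Real.rpow_natCast, ← Real.rpow_add' (abs_nonneg x)]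
    · congr 1; push_cast; ring
    · push_cast; linarith
  have h4 : x^2 * |y|^(2-q) ≤ |x|^(a+1) + |y|^q := by
    have hx := abs_nonneg x
    have hy := abs_nonneg y
    rw [← sq_abs x]
    generalize |x| = X at *
    generalize |y| = Y at *
    rcases le_total (Y) (X^a) with h | h
    · have : X^2*Y^(2-q) ≤ X^2*(X^a)^(2-q) := by
        gcongr
      have h5 : X^2*(X^a)^(2-q) = X^(a+1) := by
        rw [← Real.rpow_mul hx, ← Real.rpow_natCast, ← Real.rpow_add' hx]
        · congr 1; push_cast; linear_combination -haq
        · push_cast; nlinarith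
      have : 0 ≤ Y^q := by positivity
      linarith
    · have h5 : X ≤ Y^(q-1) := by
        have : X = (X^a)^(q-1) := by rw [← Real.rpow_mul hx, haq, Real.rpow_one]
        rw [this]
        apply Real.rpow_le_rpow (by positivity) h (by linarith)
      have : X^2*Y^(2-q) ≤ (Y^(q-1))^2*Y^(2-q) := by gcongr
      have h6 : (Y^(q-1))^2*Y^(2-q) = Y^q := by
        rw [← Real.rpow_mul_natCast hy, ← Real.rpow_add' hy]
        · congr 1; push_cast; ring
        · push_cast; linarith
      have : 0 ≤ X^(a+1) := by positivity
      linarith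
  have h5 : x^2*((x^2)^a + y^2 + κ^2)^((2-q)/2) ≤ x^2*(|x|^(a-1) + |y|^(2-q) + (κ^2)^((2-q)/2)) := by
    gcongr
  have h6 : A * ((y^2+κ^2)^(q/2) - (κ^2)^(q/2)) ≤ A * |y|^q := by
    gcongr; linarith
  nlinarith

lemma bRho_cont {a κ : ℝ} (ha : 1 ≤ a) : Continuous (fun z : ℝ × ℝ => bRho a κ z.1 z.2) := by
  unfold bRho
  have : Continuous (fun z : ℝ × ℝ => (z.1^2)^a) :=
    (by fun_prop : Continuous (fun z : ℝ × ℝ => z.1^2)).rpow_const (fun z => Or.inr (by linarith))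
  fun_prop

lemma bRhop_cont {a κ : ℝ} (hκ : 0 < κ) (ha : 1 ≤ a) (s : ℝ) :
    Continuous (fun z : ℝ × ℝ => (bRho a κ z.1 z.2)^s) :=
  (bRho_cont ha).rpow_const (fun z => Or.inl (bRho_pos hκ _ _).ne')

lemma bYp_cont {κ : ℝ} (hκ : 0 < κ) (s : ℝ) :
    Continuous (fun z : ℝ × ℝ => (z.2^2 + κ^2)^s) :=
  (by fun_prop : Continuous (fun z : ℝ × ℝ => z.2^2 + κ^2)).rpow_const
    (fun z => Or.inl (by positivity))

lemma bM_cont {a : ℝ} (ha : 1 ≤ a) : Continuous (fun z : ℝ × ℝ => (z.1^2)^a) :=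
  (by fun_prop : Continuous (fun z : ℝ × ℝ => z.1^2)).rpow_const (fun z => Or.inr (by linarith))

lemma b_conts {A q a κ : ℝ} (hκ : 0 < κ) (ha : 1 ≤ a) :
    Continuous (fun z : ℝ × ℝ => bB A q a κ z.1 z.2) ∧
    Continuous (fun z : ℝ × ℝ => bP q a κ z.1 z.2) ∧
    Continuous (fun z : ℝ × ℝ => bQ A q a κ z.1 z.2) ∧
    Continuous (fun z : ℝ × ℝ => bXX q a κ z.1 z.2) ∧
    Continuous (fun z : ℝ × ℝ => bXY q a κ z.1 z.2) ∧
    Continuous (fun z : ℝ × ℝ => bYY A q a κ z.1 z.2) := by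
  have h := fun s => bRhop_cont (a := a) hκ ha s
  have h1 := h ((2-q)/2)
  have h2 := h ((2-q)/2-1)
  have h3 := h ((2-q)/2-2)
  have h4 := bM_cont ha
  have h := fun s => bYp_cont hκ s
  have h5 := h (q/2)
  have h6 := h (q/2-1)
  have h7 := h (q/2-2)
  unfold bB bP bQ bXX bXY bYY
  refine ⟨?_, ?_, ?_, ?_, ?_, ?_⟩ <;> fun_prop


structure Caloric (N : ℕ) (u : ℝ → EuclideanSpace ℝ (Fin N) → ℝ)
    (u1 u2 : Fin N → ℝ → EuclideanSpace ℝ (Fin N) → ℝ) : Prop where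
  c0 : Continuous (fun z : ℝ × EuclideanSpace ℝ (Fin N) => u z.1 z.2)
  c1 : ∀ k, Continuous (fun z : ℝ × EuclideanSpace ℝ (Fin N) => u1 k z.1 z.2)
  c2 : ∀ k, Continuous (fun z : ℝ × EuclideanSpace ℝ (Fin N) => u2 k z.1 z.2)
  bd : ∃ M, ∀ t x, |u t x| ≤ M
  l0 : ∃ M, ∀ t, Integrable (fun x => (u t x)^2) ∧ ∫ x, (u t x)^2 ≤ M
  l1 : ∀ k, ∃ M, ∀ t, Integrable (fun x => (u1 k t x)^2) ∧ ∫ x, (u1 k t x)^2 ≤ M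
  l2 : ∀ k, ∃ M, ∀ t, Integrable (fun x => (u2 k t x)^2) ∧ ∫ x, (u2 k t x)^2 ≤ M
  d1 : ∀ k t x, HasLineDerivAt ℝ (u t) (u1 k t x) x (EuclideanSpace.single k 1)
  d2 : ∀ k t x, HasLineDerivAt ℝ (u1 k t) (u2 k t x) x (EuclideanSpace.single k 1)
  dt : ∀ t x, 0 < t → HasDerivAt (fun s => u s x) (∑ k, u2 k t x) t

lemma cal_joint {N : ℕ} {φ : ℝ → EuclideanSpace ℝ (Fin N) → ℝ}
    (hc : Continuous (fun z : ℝ × EuclideanSpace ℝ (Fin N) => φ z.1 z.2))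
    (h : ∃ M, ∀ t, Integrable (fun x => (φ t x)^2) ∧ ∫ x, (φ t x)^2 ≤ M) (T : ℝ) :
    Integrable (fun z : ℝ × EuclideanSpace ℝ (Fin N) => (φ z.1 z.2)^2)
      ((volume.restrict (Set.Ioc 0 T)).prod volume) := by
  obtain ⟨M, h⟩ := h
  have hm : AEStronglyMeasurable (fun z : ℝ × EuclideanSpace ℝ (Fin N) => (φ z.1 z.2)^2)
      ((volume.restrict (Set.Ioc 0 T)).prod volume) := (hc.pow 2).aestronglyMeasurable
  refine (integrable_prod_iff hm).2 ⟨Filter.Eventually.of_forall fun t => (h t).1, ?_⟩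
  refine Integrable.mono' (integrable_const M) hm.norm.integral_prod_right' ?_
  refine Filter.Eventually.of_forall fun t => ?_
  have : ∀ x, ‖(φ t x)^2‖ = (φ t x)^2 := fun x => by simp
  simp only [this]
  rw [Real.norm_of_nonneg (integral_nonneg fun x => sq_nonneg _)]
  exact (h t).2

noncomputable def calS {N : ℕ} (u v : ℝ → EuclideanSpace ℝ (Fin N) → ℝ)
    (u1 u2 v1 v2 : Fin N → ℝ → EuclideanSpace ℝ (Fin N) → ℝ) (t : ℝ)
    (x : EuclideanSpace ℝ (Fin N)) : ℝ :=
  (u t x)^2 + (v t x)^2 + ∑ k, ((u1 k t x)^2 + (v1 k t x)^2 + (u2 k t x)^2 + (v2 k t x)^2)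

section
variable {N : ℕ} {u v : ℝ → EuclideanSpace ℝ (Fin N) → ℝ}
    {u1 u2 v1 v2 : Fin N → ℝ → EuclideanSpace ℝ (Fin N) → ℝ}

lemma calS_slice (hu : Caloric N u u1 u2) (hv : Caloric N v v1 v2) (t : ℝ) :
    Integrable (calS u v u1 u2 v1 v2 t) := by
  unfold calS
  have a0 := hu.l0.choose_spec t |>.1
  have b0 := hv.l0.choose_spec t |>.1
  refine (a0.add b0).add (integrable_finsetSum _ fun k _ => ?_)
  exact ((((hu.l1 k).choose_spec t).1.add ((hv.l1 k).choose_spec t).1).add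
    ((hu.l2 k).choose_spec t).1).add ((hv.l2 k).choose_spec t).1

lemma calS_joint (hu : Caloric N u u1 u2) (hv : Caloric N v v1 v2) (T : ℝ) :
    Integrable (fun z : ℝ × EuclideanSpace ℝ (Fin N) => calS u v u1 u2 v1 v2 z.1 z.2)
      ((volume.restrict (Set.Ioc 0 T)).prod volume) := by
  unfold calS
  refine ((cal_joint hu.c0 hu.l0 T).add (cal_joint hv.c0 hv.l0 T)).add
    (integrable_finsetSum _ fun k _ => ?_)
  exact (((cal_joint (hu.c1 k) (hu.l1 k) T).add (cal_joint (hv.c1 k) (hv.l1 k) T)).add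
    (cal_joint (hu.c2 k) (hu.l2 k) T)).add (cal_joint (hv.c2 k) (hv.l2 k) T)

lemma calS_le (k : Fin N) (t : ℝ) (x : EuclideanSpace ℝ (Fin N)) :
    (u t x)^2 + (v t x)^2 + ((u1 k t x)^2 + (v1 k t x)^2 + (u2 k t x)^2 + (v2 k t x)^2)
      ≤ calS u v u1 u2 v1 v2 t x := by
  unfold calS
  have := Finset.single_le_sum (f := fun k => ((u1 k t x)^2 + (v1 k t x)^2 + (u2 k t x)^2 + (v2 k t x)^2))
    (fun k _ => by positivity) (Finset.mem_univ k)
  linarith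

lemma cal_cont_comp {g : ℝ × ℝ → ℝ} (hg : Continuous g)
    (hu : Caloric N u u1 u2) (hv : Caloric N v v1 v2) :
    Continuous (fun z : ℝ × EuclideanSpace ℝ (Fin N) => g (u z.1 z.2, v z.1 z.2)) ∧
    ∃ K, 0 ≤ K ∧ ∀ t x, |g (u t x, v t x)| ≤ K := by
  refine ⟨hg.comp (hu.c0.prodMk hv.c0), ?_⟩
  obtain ⟨M, hM⟩ := hu.bd
  obtain ⟨M', hM'⟩ := hv.bd
  obtain ⟨K, hK⟩ := (isCompact_Icc.prod isCompact_Icc :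
    IsCompact (Set.Icc (-M) M ×ˢ Set.Icc (-M') M')).exists_bound_of_continuousOn hg.continuousOn
  refine ⟨max K 0, le_max_right _ _, fun t x => le_trans ?_ (le_max_left _ _)⟩
  exact hK _ ⟨abs_le.1 (hM t x), abs_le.1 (hM' t x)⟩

lemma cal_main (hu : Caloric N u u1 u2) (hv : Caloric N v v1 v2)
    {A q a κ : ℝ} (hκ : 0 < κ) (hq : 1 < q) (hq2 : q ≤ 2)
    (ha : a = 1/(q-1)) (hA0 : 0 ≤ A)
    (hA : 1 + 16*a^2*((2-q)/2)^2 + (2-q) ≤ A*(q*(q-1)))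
    (hb0 : Integrable (fun x => bB A q a κ (u 0 x) (v 0 x))) (i j : Fin N) {T : ℝ} (hT : 0 ≤ T) :
    Integrable (fun z : ℝ × EuclideanSpace ℝ (Fin N) => 2 * (|u1 i z.1 z.2| * |v1 j z.1 z.2|))
      ((volume.restrict (Set.Ioc 0 T)).prod volume) ∧
    ∫ t in Set.Ioc 0 T, ∫ x, 2 * (|u1 i t x| * |v1 j t x|) ≤ ∫ x, bB A q a κ (u 0 x) (v 0 x) := by
  have ha1 : 1 ≤ a := by
    rw [ha, le_div_iff₀ (by linarith)]; linarith
  obtain ⟨cB, cP, cQ, cXX, cXY, cYY⟩ := b_conts (A := A) (q := q) hκ ha1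
  obtain ⟨cB, -⟩ := cal_cont_comp cB hu hv
  obtain ⟨cP, KP, KP0, hP⟩ := cal_cont_comp cP hu hv
  obtain ⟨cQ, KQ, KQ0, hQ⟩ := cal_cont_comp cQ hu hv
  obtain ⟨cXX, KXX, KXX0, hXX⟩ := cal_cont_comp cXX hu hv
  obtain ⟨cXY, KXY, KXY0, hXY⟩ := cal_cont_comp cXY hu hv
  obtain ⟨cYY, KYY, KYY0, hYY⟩ := cal_cont_comp cYY hu hv
  simp only at *
  let P := fun t x => bP q a κ (u t x) (v t x)
  let Q := fun t x => bQ A q a κ (u t x) (v t x)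
  let XX := fun t x => bXX q a κ (u t x) (v t x)
  let XY := fun t x => bXY q a κ (u t x) (v t x)
  let YY := fun t x => bYY A q a κ (u t x) (v t x)
  let Hs := fun (k : Fin N) t x => XX t x * (u1 k t x)^2 + 2 * XY t x * u1 k t x * v1 k t x
    + YY t x * (v1 k t x)^2
  let G := fun (k : Fin N) t x => u t x * P t x * u2 k t x + v t x * Q t x * v2 k t x
  let D := fun (k : Fin N) t x => u t x * P t x * u1 k t x + v t x * Q t x * v1 k t x
  have c0 := hu.c0
  have c0' := hv.c0
  have c1 := hu.c1
  have c1' := hv.c1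
  have c2 := hu.c2
  have c2' := hv.c2
  have cG : ∀ k, Continuous (fun z : ℝ × EuclideanSpace ℝ (Fin N) => G k z.1 z.2) := by
    intro k; have := c2 k; have := c2' k; simp only [G, P, Q]; fun_prop
  have cD : ∀ k, Continuous (fun z : ℝ × EuclideanSpace ℝ (Fin N) => D k z.1 z.2) := by
    intro k; have := c1 k; have := c1' k; simp only [D, P, Q]; fun_prop
  have cH : ∀ k, Continuous (fun z : ℝ × EuclideanSpace ℝ (Fin N) => Hs k z.1 z.2) := by
    intro k; have := c1 k; have := c1' k; simp only [Hs, XX, XY, YY]; fun_prop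
  have key : ∀ (c K a b : ℝ), 0 ≤ K → |c| ≤ K → |a * c * b| ≤ K * (a^2 + b^2) := by
    intro c K a b hK hc
    have : |a * c * b| = |c| * (|a| * |b|) := by rw [abs_mul, abs_mul]; ring
    rw [this]
    have : |a| * |b| ≤ a^2 + b^2 := by
      rw [← sq_abs a, ← sq_abs b]; nlinarith [sq_nonneg (|a| - |b|), sq_nonneg (|a|), sq_nonneg (|b|)]
    calc |c| * (|a| * |b|) ≤ K * (|a| * |b|) := by gcongr
      _ ≤ _ := by gcongr
  have Snn : ∀ t x, 0 ≤ calS u v u1 u2 v1 v2 t x := fun t x => by unfold calS; positivity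
  have bG : ∀ k t x, ‖G k t x‖ ≤ (KP + KQ) * calS u v u1 u2 v1 v2 t x := by
    intro k t x
    have hS := calS_le (u := u) (v := v) (u1 := u1) (u2 := u2) (v1 := v1) (v2 := v2) k t x
    have h1 := key _ _ (u t x) (u2 k t x) KP0 (hP t x)
    have h2 := key _ _ (v t x) (v2 k t x) KQ0 (hQ t x)
    have h3 : (u t x)^2 + (u2 k t x)^2 ≤ calS u v u1 u2 v1 v2 t x := by
      nlinarith [sq_nonneg (v t x), sq_nonneg (u1 k t x), sq_nonneg (v1 k t x), sq_nonneg (v2 k t x)]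
    have h4 : (v t x)^2 + (v2 k t x)^2 ≤ calS u v u1 u2 v1 v2 t x := by
      nlinarith [sq_nonneg (u t x), sq_nonneg (u1 k t x), sq_nonneg (v1 k t x), sq_nonneg (u2 k t x)]
    have h5 := mul_le_mul_of_nonneg_left h3 KP0
    have h6 := mul_le_mul_of_nonneg_left h4 KQ0
    refine (abs_add_le _ _).trans ?_
    linarith
  have bD : ∀ k t x, ‖D k t x‖ ≤ (KP + KQ) * calS u v u1 u2 v1 v2 t x := by
    intro k t x
    have hS := calS_le (u := u) (v := v) (u1 := u1) (u2 := u2) (v1 := v1) (v2 := v2) k t x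
    have h1 := key _ _ (u t x) (u1 k t x) KP0 (hP t x)
    have h2 := key _ _ (v t x) (v1 k t x) KQ0 (hQ t x)
    have h3 : (u t x)^2 + (u1 k t x)^2 ≤ calS u v u1 u2 v1 v2 t x := by
      nlinarith [sq_nonneg (v t x), sq_nonneg (u2 k t x), sq_nonneg (v1 k t x), sq_nonneg (v2 k t x)]
    have h4 : (v t x)^2 + (v1 k t x)^2 ≤ calS u v u1 u2 v1 v2 t x := by
      nlinarith [sq_nonneg (u t x), sq_nonneg (u1 k t x), sq_nonneg (v2 k t x), sq_nonneg (u2 k t x)]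
    have h5 := mul_le_mul_of_nonneg_left h3 KP0
    have h6 := mul_le_mul_of_nonneg_left h4 KQ0
    refine (abs_add_le _ _).trans ?_
    linarith
  have bH : ∀ k t x, ‖Hs k t x‖ ≤ (KXX + 2 * KXY + KYY) * calS u v u1 u2 v1 v2 t x := by
    intro k t x
    have hS := calS_le (u := u) (v := v) (u1 := u1) (u2 := u2) (v1 := v1) (v2 := v2) k t x
    have h0 : (u1 k t x)^2 + (v1 k t x)^2 ≤ calS u v u1 u2 v1 v2 t x := by
      nlinarith [sq_nonneg (u t x), sq_nonneg (v t x), sq_nonneg (u2 k t x), sq_nonneg (v2 k t x)]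
    have h1 : |XX t x * (u1 k t x)^2| ≤ KXX * calS u v u1 u2 v1 v2 t x := by
      rw [abs_mul, abs_of_nonneg (sq_nonneg (u1 k t x))]
      refine mul_le_mul (hXX t x) ?_ (sq_nonneg _) KXX0
      nlinarith [sq_nonneg (v1 k t x)]
    have h2 : |2 * XY t x * u1 k t x * v1 k t x| ≤ 2 * KXY * calS u v u1 u2 v1 v2 t x := by
      have h3 := key _ _ (u1 k t x) (v1 k t x) KXY0 (hXY t x)
      have h4 : 2 * XY t x * u1 k t x * v1 k t x = 2 * (u1 k t x * XY t x * v1 k t x) := by ring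
      rw [h4, abs_mul, abs_two]
      have h6 := mul_le_mul_of_nonneg_left h0 KXY0
      simp only [XY]
      linarith
    have h3 : |YY t x * (v1 k t x)^2| ≤ KYY * calS u v u1 u2 v1 v2 t x := by
      rw [abs_mul, abs_of_nonneg (sq_nonneg (v1 k t x))]
      refine mul_le_mul (hYY t x) ?_ (sq_nonneg _) KYY0
      nlinarith [sq_nonneg (u1 k t x)]
    refine (abs_add_le _ _).trans ?_
    have := abs_add_le (XX t x * (u1 k t x)^2) (2 * XY t x * u1 k t x * v1 k t x)
    linarith
  have slice : ∀ (t : ℝ), Continuous (fun x : EuclideanSpace ℝ (Fin N) => (t, x)) := by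
    intro t; fun_prop
  have iG : ∀ k t, Integrable (G k t) := fun k t =>
    ((calS_slice hu hv t).const_mul _).mono' ((cG k).comp (slice t)).aestronglyMeasurable
      (Filter.Eventually.of_forall (bG k t))
  have iD : ∀ k t, Integrable (D k t) := fun k t =>
    ((calS_slice hu hv t).const_mul _).mono' ((cD k).comp (slice t)).aestronglyMeasurable
      (Filter.Eventually.of_forall (bD k t))
  have iH : ∀ k t, Integrable (Hs k t) := fun k t =>
    ((calS_slice hu hv t).const_mul _).mono' ((cH k).comp (slice t)).aestronglyMeasurable
      (Filter.Eventually.of_forall (bH k t))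
  have jG : ∀ k, Integrable (fun z : ℝ × EuclideanSpace ℝ (Fin N) => G k z.1 z.2)
      ((volume.restrict (Set.Ioc 0 T)).prod volume) := fun k =>
    ((calS_joint hu hv T).const_mul _).mono' (cG k).aestronglyMeasurable
      (Filter.Eventually.of_forall fun z => bG k z.1 z.2)
  have jH : ∀ k, Integrable (fun z : ℝ × EuclideanSpace ℝ (Fin N) => Hs k z.1 z.2)
      ((volume.restrict (Set.Ioc 0 T)).prod volume) := fun k =>
    ((calS_joint hu hv T).const_mul _).mono' (cH k).aestronglyMeasurable
      (Filter.Eventually.of_forall fun z => bH k z.1 z.2)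
  -- integration by parts in space
  have ibp : ∀ k t, ∫ x, G k t x = - ∫ x, Hs k t x := by
    intro k t
    have hd : ∀ x, HasLineDerivAt ℝ (D k t) (Hs k t x + G k t x) x (EuclideanSpace.single k 1) := by
      intro x
      have e1 := hu.d1 k t x
      have e2 := hu.d2 k t x
      have e1' := hv.d1 k t x
      have e2' := hv.d2 k t x
      unfold HasLineDerivAt at *
      have X := (bX_deriv (q := q) hκ ha1 e1 e1').mul e2
      have Y := (bY_deriv' (A := A) (q := q) hκ ha1 e1 e1').mul e2'
      refine HasDerivAt.congr_deriv (X.add Y) ?_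
      simp [Hs, G, XX, XY, YY, P, Q]
      ring
    have h := integral_bilinear_hasLineDerivAt_right_eq_neg_left_of_integrable
      (μ := (volume : Measure (EuclideanSpace ℝ (Fin N)))) (f := fun _ => (1:ℝ)) (f' := fun _ => (0:ℝ))
      (g := D k t) (g' := fun x => Hs k t x + G k t x) (v := EuclideanSpace.single k 1)
      (B := ContinuousLinearMap.mul ℝ ℝ)
      (by simp) (by simp only [ContinuousLinearMap.mul_apply', one_mul]; exact (iH k t).add (iG k t)) (by simpa using iD k t)
      (fun x _ => by simpa [HasLineDerivAt] using hasDerivAt_const (0:ℝ) (1:ℝ)) (fun x _ => hd x)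
    simp at h
    rw [integral_add (iH k t) (iG k t)] at h
    linarith
  -- FTC in time
  have ftc : ∀ x, ∫ t in Set.Ioc 0 T, (∑ k, G k t x) =
      bB A q a κ (u T x) (v T x) - bB A q a κ (u 0 x) (v 0 x) := by
    intro x
    rw [← intervalIntegral.integral_of_le hT]
    have ct : Continuous (fun t : ℝ => (t, x)) := by fun_prop
    refine intervalIntegral.integral_eq_sub_of_hasDerivAt_of_le hT
      (f := fun t => bB A q a κ (u t x) (v t x)) (cB.comp ct).continuousOn ?_ ?_
    · intro t ht
      refine HasDerivAt.congr_deriv (bB_deriv hκ ha1 (hu.dt t x ht.1) (hv.dt t x ht.1)) ?_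
      simp only [G, P, Q, Finset.mul_sum, Finset.sum_add_distrib]
    · apply Continuous.intervalIntegrable
      exact continuous_finsetSum _ fun k _ => (cG k).comp ct
  have jGs : Integrable (fun z : ℝ × EuclideanSpace ℝ (Fin N) => ∑ k, G k z.1 z.2)
      ((volume.restrict (Set.Ioc 0 T)).prod volume) := integrable_finsetSum _ fun k _ => jG k
  have jHs : Integrable (fun z : ℝ × EuclideanSpace ℝ (Fin N) => ∑ k, Hs k z.1 z.2)
      ((volume.restrict (Set.Ioc 0 T)).prod volume) := integrable_finsetSum _ fun k _ => jH k
  have pw : ∀ t x, 2 * (|u1 i t x| * |v1 j t x|) ≤ ∑ k, Hs k t x := fun t x =>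
    b_hess_sum hκ hq hq2 ha hA (u t x) (v t x) (fun k => u1 k t x) (fun k => v1 k t x) i j
  have jL : Integrable (fun z : ℝ × EuclideanSpace ℝ (Fin N) => 2 * (|u1 i z.1 z.2| * |v1 j z.1 z.2|))
      ((volume.restrict (Set.Ioc 0 T)).prod volume) := by
    refine jHs.mono' ?_ (Filter.Eventually.of_forall fun z => ?_)
    · exact (continuous_const.mul ((c1 i).abs.mul (c1' j).abs)).aestronglyMeasurable
    · rw [Real.norm_of_nonneg (by positivity)]; exact pw _ _
  refine ⟨jL, ?_⟩
  calc ∫ t in Set.Ioc 0 T, ∫ x, 2 * (|u1 i t x| * |v1 j t x|)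
      ≤ ∫ t in Set.Ioc 0 T, ∫ x, ∑ k, Hs k t x := by
        rw [← integral_prod _ jL, ← integral_prod _ jHs]
        exact integral_mono jL jHs fun z => pw _ _
    _ = - ∫ t in Set.Ioc 0 T, ∫ x, ∑ k, G k t x := by
        rw [← integral_neg]
        congr 1; ext t
        rw [integral_finsetSum _ fun k _ => iH k t, integral_finsetSum _ fun k _ => iG k t,
          ← Finset.sum_neg_distrib]
        exact Finset.sum_congr rfl fun k _ => by rw [ibp]; ring
    _ = - ∫ x, ∫ t in Set.Ioc 0 T, ∑ k, G k t x := by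
        rw [integral_integral_swap jGs]
    _ ≤ ∫ x, bB A q a κ (u 0 x) (v 0 x) := by
        rw [← integral_neg]
        refine integral_mono ?_ hb0 fun x => ?_
        · exact (jGs.swap.integral_prod_left).neg
        · simp only [ftc]
          have := bB_nonneg (a := a) hA0 hκ hq (u T x) (v T x)
          linarith
end

section Helpers
open scoped SchwartzMap FourierTransform LineDeriv ContDiff


abbrev EN (N : ℕ) := EuclideanSpace ℝ (Fin N)

noncomputable def hg {N : ℕ} (t : ℝ) (η : EN N) : ℂ :=
  ((Real.exp (-(4 * π ^ 2 * max t 0) * ‖η‖ ^ 2) : ℝ) : ℂ)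

lemma exp_iter_bound (n : ℕ) (x : ℝ) (hx : x < 1) :
    ‖iteratedFDerivWithin ℝ n Real.exp (Set.Iio 1) x‖ ≤ Real.exp 1 := by
  rw [norm_iteratedFDerivWithin_eq_norm_iteratedDerivWithin,
    iteratedDerivWithin_eq_iteratedDeriv isOpen_Iio.uniqueDiffOn
      Real.contDiff_exp.contDiffAt hx, iteratedDeriv_eq_iterate, Real.iter_deriv_exp]
  rw [Real.norm_of_nonneg (Real.exp_pos x).le]
  exact Real.exp_le_exp.2 hx.le

lemma hg_tg {N : ℕ} (t : ℝ) : Function.HasTemperateGrowth (hg (N := N) t) := by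
  have h1 : Function.HasTemperateGrowth
      (fun η : EN N => (-(4 * π ^ 2 * max t 0)) * ‖η‖ ^ 2) := by fun_prop
  have h2 : Function.HasTemperateGrowth
      (Real.exp ∘ (fun η : EN N => (-(4 * π ^ 2 * max t 0)) * ‖η‖ ^ 2)) := by
    refine Function.HasTemperateGrowth.comp' (t := Set.Iio 1) ?_ isOpen_Iio.uniqueDiffOn
      Real.contDiff_exp.contDiffOn ?_ h1
    · rintro _ ⟨η, rfl⟩
      have : 0 ≤ (4 * π ^ 2 * max t 0) * ‖η‖ ^ 2 := by positivity
      simp only [Set.mem_Iio]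
      linarith
    · intro n
      refine ⟨0, Real.exp 1, (Real.exp_pos 1).le, fun m _ x hx => ?_⟩
      simpa using exp_iter_bound m x hx
  exact Function.HasTemperateGrowth.comp Function.Complex.hasTemperateGrowth_ofReal h2

lemma hg_norm {N : ℕ} (t : ℝ) (η : EN N) : ‖hg t η‖ ≤ 1 := by
  unfold hg
  rw [Complex.norm_real, Real.norm_of_nonneg (Real.exp_pos _).le]
  apply Real.exp_le_one_iff.2
  have : 0 ≤ (4 * π ^ 2 * max t 0) * ‖η‖ ^ 2 := by positivity
  linarith

lemma hg_cont {N : ℕ} : Continuous (fun z : ℝ × EN N => hg z.1 z.2) := by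
  unfold hg; fun_prop

noncomputable def Hs {N : ℕ} (t : ℝ) (f : 𝓢(EN N, ℂ)) : 𝓢(EN N, ℂ) :=
  𝓕⁻ (SchwartzMap.smulLeftCLM ℂ (hg (N := N) t) (𝓕 f))

lemma Hs_apply {N : ℕ} (t : ℝ) (f : 𝓢(EN N, ℂ)) (x : EN N) :
    Hs t f x = ∫ η, Complex.exp (((2 * π * ⟪η, x⟫ : ℝ) : ℂ) * Complex.I) * (hg t η * 𝓕 f η) := by
  unfold Hs
  rw [SchwartzMap.fourierInv_coe, Real.fourierInv_eq']
  simp only [SchwartzMap.smulLeftCLM_apply_apply (hg_tg t), smul_eq_mul]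

lemma Hs_int {N : ℕ} (f : 𝓢(EN N, ℂ)) : Integrable (fun η => ‖𝓕 f η‖) :=
  (𝓕 f).integrable.norm

lemma e_norm {N : ℕ} (η x : EN N) :
    ‖Complex.exp (((2 * π * ⟪η, x⟫ : ℝ) : ℂ) * Complex.I)‖ = 1 := Complex.norm_exp_ofReal_mul_I _

lemma Hs_integrand_le {N : ℕ} (t : ℝ) (f : 𝓢(EN N, ℂ)) (x η : EN N) :
    ‖Complex.exp (((2 * π * ⟪η, x⟫ : ℝ) : ℂ) * Complex.I) * (hg t η * 𝓕 f η)‖ ≤ ‖𝓕 f η‖ := by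
  rw [norm_mul, e_norm, norm_mul, one_mul]
  exact mul_le_of_le_one_left (norm_nonneg _) (hg_norm t η)

lemma Hs_bd {N : ℕ} (t : ℝ) (f : 𝓢(EN N, ℂ)) (x : EN N) : ‖Hs t f x‖ ≤ ∫ η, ‖𝓕 f η‖ := by
  rw [Hs_apply]
  exact norm_integral_le_of_norm_le (Hs_int f)
    (Filter.Eventually.of_forall fun η => Hs_integrand_le t f x η)

lemma Hs_cont {N : ℕ} (f : 𝓢(EN N, ℂ)) : Continuous (fun z : ℝ × EN N => Hs z.1 f z.2) := by
  simp only [Hs_apply]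
  refine continuous_of_dominated (bound := fun η => ‖𝓕 f η‖) (fun z => ?_) (fun z => ?_)
    (Hs_int f) ?_
  · refine Continuous.aestronglyMeasurable ?_
    have h1 : Continuous (fun η : EN N => hg z.1 η) :=
      hg_cont.comp (Continuous.prodMk continuous_const continuous_id)
    have h2 : Continuous (fun η : EN N => 𝓕 f η) := (𝓕 f).continuous
    fun_prop
  · exact Filter.Eventually.of_forall fun η => Hs_integrand_le z.1 f z.2 η
  · refine Filter.Eventually.of_forall fun η => ?_
    have h1 : Continuous (fun z : ℝ × EN N => hg z.1 η) :=
      hg_cont.comp (Continuous.prodMk continuous_fst continuous_const)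
    fun_prop

lemma Hs_four {N : ℕ} (t : ℝ) (f : 𝓢(EN N, ℂ)) (η : EN N) : 𝓕 (Hs t f) η = hg t η * 𝓕 f η := by
  unfold Hs
  rw [FourierTransform.fourier_fourierInv_eq, SchwartzMap.smulLeftCLM_apply_apply (hg_tg t),
    smul_eq_mul]

lemma sch_sq {N : ℕ} (f : 𝓢(EN N, ℂ)) : Integrable (fun x => ‖f x‖ ^ 2) := by
  have := (f.memLp 2 volume).integrable_norm_pow (by norm_num)
  simpa using this

lemma Hs_l2 {N : ℕ} (t : ℝ) (f : 𝓢(EN N, ℂ)) : ∫ x, ‖Hs t f x‖ ^ 2 ≤ ∫ x, ‖f x‖ ^ 2 := by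
  rw [← SchwartzMap.integral_norm_sq_fourier (Hs t f), ← SchwartzMap.integral_norm_sq_fourier f]
  refine integral_mono (sch_sq _) (sch_sq _) fun η => ?_
  simp only [Hs_four]
  rw [norm_mul]
  exact pow_le_pow_left₀ (by positivity)
    (mul_le_of_le_one_left (norm_nonneg _) (hg_norm t η)) 2

lemma Hs_zero {N : ℕ} (f : 𝓢(EN N, ℂ)) : Hs 0 f = f := by
  have : 𝓕 (Hs 0 f) = 𝓕 f := by
    ext η; rw [Hs_four]; simp [hg]
  have h2 := congrArg (fun g => 𝓕⁻ g) this
  simpa using h2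

lemma four_ld {N : ℕ} (f : 𝓢(EN N, ℂ)) (m η : EN N) :
    𝓕 (∂_{m} f) η = (2 * π * Complex.I) * (⟪η, m⟫ : ℂ) * 𝓕 f η := by
  rw [SchwartzMap.fourier_lineDerivOp_eq, smul_apply,
    SchwartzMap.smulLeftCLM_apply_apply (by fun_prop)]
  simp only [smul_eq_mul, Complex.real_smul]
  ring

lemma sch_inj {N : ℕ} {f g : 𝓢(EN N, ℂ)} (h : ∀ η, 𝓕 f η = 𝓕 g η) : f = g := by
  have : 𝓕 f = 𝓕 g := by ext η; exact h η
  have h2 := congrArg (fun g => 𝓕⁻ g) this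
  simpa using h2

lemma Hs_ld {N : ℕ} (t : ℝ) (f : 𝓢(EN N, ℂ)) (m : EN N) : ∂_{m} (Hs t f) = Hs t (∂_{m} f) := by
  apply sch_inj
  intro η
  rw [four_ld, Hs_four, Hs_four, four_ld]; ring

lemma Hs_hasLD {N : ℕ} (t : ℝ) (f : 𝓢(EN N, ℂ)) (m x : EN N) :
    HasLineDerivAt ℝ (Hs t f) (Hs t (∂_{m} f) x) x m := by
  rw [← Hs_ld, SchwartzMap.lineDerivOp_apply_eq_fderiv]
  exact ((Hs t f).differentiableAt.hasFDerivAt).hasLineDerivAt m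

lemma hg_deriv {N : ℕ} (t : ℝ) (ht : 0 < t) (η : EN N) :
    HasDerivAt (fun s => hg s η) (-(4 * π ^ 2 * ‖η‖ ^ 2 : ℝ) * hg t η) t := by
  have h1 : HasDerivAt (fun s : ℝ => Real.exp (-(4 * π ^ 2 * s) * ‖η‖ ^ 2))
      (Real.exp (-(4 * π ^ 2 * t) * ‖η‖ ^ 2) * (-(4 * π ^ 2 * 1) * ‖η‖ ^ 2)) t :=
    ((((hasDerivAt_id t).const_mul (4 * π ^ 2)).neg).mul_const (‖η‖ ^ 2)).exp
  have h2 := h1.ofReal_comp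
  have h3 : (fun s => hg s η) =ᶠ[nhds t]
      (fun s : ℝ => ((Real.exp (-(4 * π ^ 2 * s) * ‖η‖ ^ 2) : ℝ) : ℂ)) := by
    filter_upwards [lt_mem_nhds ht] with s hs
    unfold hg; rw [max_eq_left hs.le]
  refine (h2.congr_of_eventuallyEq h3).congr_deriv ?_
  unfold hg; rw [max_eq_left ht.le]
  push_cast; ring

lemma Hs_dt {N : ℕ} (f : 𝓢(EN N, ℂ)) (t : ℝ) (ht : 0 < t) (x : EN N) :
    HasDerivAt (fun s => Hs s f x)
      (∑ k : Fin N, Hs t (∂_{EuclideanSpace.single k (1:ℝ)} (∂_{EuclideanSpace.single k (1:ℝ)} f)) x) t := by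
  have hfc : Continuous (fun η : EN N => 𝓕 f η) := (𝓕 f).continuous
  have hgc : ∀ s, Continuous (fun η : EN N => hg s η) := fun s =>
      hg_cont.comp (Continuous.prodMk continuous_const continuous_id)
  have key := hasDerivAt_integral_of_dominated_loc_of_deriv_le (μ := volume)
    (F := fun s η => Complex.exp (((2 * π * ⟪η, x⟫ : ℝ) : ℂ) * Complex.I) * (hg s η * 𝓕 f η))
    (F' := fun s η => Complex.exp (((2 * π * ⟪η, x⟫ : ℝ) : ℂ) * Complex.I) *
      ((-(4 * π ^ 2 * ‖η‖ ^ 2 : ℝ) * hg s η) * 𝓕 f η))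
    (bound := fun η => (4 * π ^ 2) * (‖η‖ ^ 2 * ‖𝓕 f η‖)) (x₀ := t) (s := Set.Ioi 0)
    (Ioi_mem_nhds ht) ?_ ?_ ?_ ?_ ?_ ?_
  · have h := key.2
    simp only [← Hs_apply] at h
    refine h.congr_deriv ?_
    simp only [Hs_apply]
    rw [← integral_finsetSum]
    · refine integral_congr_ae (Filter.Eventually.of_forall fun η => ?_)
      simp only [four_ld, EuclideanSpace.inner_single_right]
      have hs : (((‖η‖ ^ 2 : ℝ)) : ℂ) = ∑ k, (η k : ℂ) ^ 2 := by
        rw [EuclideanSpace.real_norm_sq_eq]; push_cast; rfl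
      have : -((4 * π ^ 2 * ‖η‖ ^ 2 : ℝ) : ℂ) = ∑ k, (2 * π * Complex.I) ^ 2 * (η k : ℂ) ^ 2 := by
        rw [← Finset.mul_sum, ← hs, mul_pow, Complex.I_sq]; push_cast; ring
      rw [this, Finset.sum_mul, Finset.sum_mul, Finset.mul_sum]
      refine Finset.sum_congr rfl fun k _ => ?_
      simp
      ring
    · intro k _
      refine Integrable.mono' (Hs_int _) ?_ (Filter.Eventually.of_forall fun η => Hs_integrand_le t _ x η)
      have h2 := (𝓕 (∂_{EuclideanSpace.single k (1:ℝ)} (∂_{EuclideanSpace.single k (1:ℝ)} f))).continuous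
      have h3 := hgc t
      refine Continuous.aestronglyMeasurable ?_
      fun_prop
  · refine Filter.Eventually.of_forall fun s => Continuous.aestronglyMeasurable ?_
    have h3 := hgc s
    fun_prop
  · refine Integrable.mono' (Hs_int f) ?_ (Filter.Eventually.of_forall fun η => Hs_integrand_le t _ x η)
    have h3 := hgc t
    refine Continuous.aestronglyMeasurable ?_
    fun_prop
  · have h3 := hgc t
    refine Continuous.aestronglyMeasurable ?_
    fun_prop
  · refine Filter.Eventually.of_forall fun η s _ => ?_
    rw [norm_mul, e_norm, norm_mul, norm_mul, one_mul, norm_neg, Complex.norm_real,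
      Real.norm_of_nonneg (by positivity), ← mul_assoc]
    refine mul_le_mul_of_nonneg_right ?_ (norm_nonneg _)
    exact mul_le_of_le_one_right (by positivity) (hg_norm s η)
  · exact ((𝓕 f).integrable_pow_mul volume 2).const_mul _
  · refine Filter.Eventually.of_forall fun η s hs => ?_
    exact ((hg_deriv s hs η).mul_const _).const_mul _

lemma Hs_caloric {N : ℕ} (f : 𝓢(EN N, ℂ)) (L : ℂ →L[ℝ] ℝ) (hL : ∀ z, |L z| ≤ ‖z‖) :
    Caloric N (fun t x => L (Hs t f x))
      (fun k t x => L (Hs t (∂_{EuclideanSpace.single k (1:ℝ)} f) x))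
      (fun k t x => L (Hs t (∂_{EuclideanSpace.single k (1:ℝ)} (∂_{EuclideanSpace.single k (1:ℝ)} f)) x)) := by
  have hc : ∀ g : 𝓢(EN N, ℂ), Continuous (fun z : ℝ × EN N => L (Hs z.1 g z.2)) := fun g =>
    L.continuous.comp (Hs_cont g)
  have hl : ∀ g : 𝓢(EN N, ℂ), ∃ M, ∀ t, Integrable (fun x => (L (Hs t g x)) ^ 2) ∧
      ∫ x, (L (Hs t g x)) ^ 2 ≤ M := by
    intro g
    refine ⟨∫ x, ‖g x‖ ^ 2, fun t => ?_⟩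
    have hle : ∀ x, (L (Hs t g x)) ^ 2 ≤ ‖Hs t g x‖ ^ 2 := fun x => by
      rw [← sq_abs]; exact pow_le_pow_left₀ (abs_nonneg _) (hL _) 2
    have hi : Integrable (fun x => (L (Hs t g x)) ^ 2) := by
      refine Integrable.mono' (sch_sq (Hs t g)) ?_ (Filter.Eventually.of_forall fun x => ?_)
      · exact ((L.continuous.comp (Hs t g).continuous).pow 2).aestronglyMeasurable
      · rw [Real.norm_of_nonneg (sq_nonneg _)]; exact hle x
    exact ⟨hi, (integral_mono hi (sch_sq (Hs t g)) hle).trans (Hs_l2 t g)⟩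
  have hd : ∀ (g : 𝓢(EN N, ℂ)) (t : ℝ) (x m : EN N),
      HasLineDerivAt ℝ (fun x => L (Hs t g x)) (L (Hs t (∂_{m} g) x)) x m := by
    intro g t x m
    have h : HasDerivAt (fun s : ℝ => Hs t g (x + s • m)) (Hs t (∂_{m} g) x) 0 := Hs_hasLD t g m x
    exact L.hasFDerivAt.comp_hasDerivAt (0 : ℝ) h
  refine ⟨hc _, fun k => hc _, fun k => hc _, ⟨_, fun t x => (hL _).trans (Hs_bd t f x)⟩, hl _,
    fun k => hl _, fun k => hl _, fun k t x => hd _ _ _ _, fun k t x => hd _ _ _ _, ?_⟩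
  intro t x ht
  have := L.hasFDerivAt.comp_hasDerivAt t (Hs_dt f t ht x)
  refine HasDerivAt.congr_deriv this ?_
  rw [map_sum]



lemma sch_rpow {N : ℕ} (f : 𝓢(EN N, ℂ)) (p : ℝ) (hp : 0 < p) : Integrable (fun x => ‖f x‖ ^ p) := by
  have := (f.memLp (ENNReal.ofReal p) volume).integrable_norm_rpow (by simpa using hp)
    ENNReal.ofReal_ne_top
  rwa [ENNReal.toReal_ofReal hp.le] at this

lemma bil0 (q : ℝ) (hq : 1 < q) (hq2 : q ≤ 2) : ∃ C : ℝ, 0 < C ∧ ∀ (N : ℕ) (f g : 𝓢(EN N, ℂ))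
    (L L' : ℂ →L[ℝ] ℝ) (_ : ∀ z, |L z| ≤ ‖z‖) (_ : ∀ z, |L' z| ≤ ‖z‖) (i j : Fin N) (T : ℝ) (_ : 0 ≤ T),
    Integrable (fun z : ℝ × EN N => 2 * (|L (Hs z.1 (∂_{EuclideanSpace.single i (1:ℝ)} f) z.2)| *
      |L' (Hs z.1 (∂_{EuclideanSpace.single j (1:ℝ)} g) z.2)|))
      ((volume.restrict (Set.Ioc 0 T)).prod volume) ∧
    ∫ t in Set.Ioc 0 T, ∫ x, 2 * (|L (Hs t (∂_{EuclideanSpace.single i (1:ℝ)} f) x)| *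
      |L' (Hs t (∂_{EuclideanSpace.single j (1:ℝ)} g) x)|) ≤
      C * ((∫ x, ‖f x‖ ^ (1 / (q - 1) + 1)) + ∫ x, ‖g x‖ ^ q) := by
  set a := 1 / (q - 1) with ha
  set A := (1 + 16 * a ^ 2 * ((2 - q) / 2) ^ 2 + (2 - q)) / (q * (q - 1)) with hA
  have hq1 : 0 < q - 1 := by linarith
  have ha1 : 1 ≤ a := by rw [ha, le_div_iff₀ hq1]; linarith
  have hA0 : 0 ≤ A := by
    rw [hA]; apply div_nonneg
    · have := sq_nonneg a
      have h2 := sq_nonneg ((2-q)/2)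
      have : 0 ≤ 2 - q := by linarith
      positivity
    · apply mul_nonneg <;> linarith
  refine ⟨A + 3, by linarith, ?_⟩
  intro N f g L L' hL hL' i j T hT
  have hu := Hs_caloric f L hL
  have hv := Hs_caloric g L' hL'
  have hAA : 1 + 16 * a ^ 2 * ((2 - q) / 2) ^ 2 + (2 - q) ≤ A * (q * (q - 1)) := by
    rw [hA, div_mul_cancel₀]
    have : 0 < q * (q - 1) := by apply mul_pos <;> linarith
    exact this.ne'
  have hf2 : Integrable (fun x => ‖f x‖ ^ (a + 1)) := sch_rpow f (a + 1) (by linarith)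
  have hgq : Integrable (fun x => ‖g x‖ ^ q) := sch_rpow g q (by linarith)
  have hff := sch_sq f
  have hdom : ∀ κ : ℝ, Integrable (fun x => (A + 1) * ‖g x‖ ^ q + 2 * ‖f x‖ ^ (a + 1) +
      (κ ^ 2) ^ ((2 - q) / 2) * ‖f x‖ ^ 2) := fun κ =>
    ((hgq.const_mul _).add (hf2.const_mul _)).add (hff.const_mul _)
  have hle : ∀ κ : ℝ, 0 < κ → ∀ x, bB A q a κ (L (Hs 0 f x)) (L' (Hs 0 g x)) ≤
      (A + 1) * ‖g x‖ ^ q + 2 * ‖f x‖ ^ (a + 1) + (κ ^ 2) ^ ((2 - q) / 2) * ‖f x‖ ^ 2 := by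
    intro κ hκ x
    rw [Hs_zero, Hs_zero]
    refine (bB_le hA0 hκ hq hq2 ha _ _).trans ?_
    have h1 : |L' (g x)| ^ q ≤ ‖g x‖ ^ q :=
      Real.rpow_le_rpow (abs_nonneg _) (hL' _) (by linarith)
    have h2 : |L (f x)| ^ (a + 1) ≤ ‖f x‖ ^ (a + 1) :=
      Real.rpow_le_rpow (abs_nonneg _) (hL _) (by linarith)
    have h3 : (L (f x)) ^ 2 ≤ ‖f x‖ ^ 2 := by
      rw [← sq_abs]; exact pow_le_pow_left₀ (abs_nonneg _) (hL _) 2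
    gcongr
  have hbi : ∀ κ : ℝ, 0 < κ → Integrable (fun x => bB A q a κ (L (Hs 0 f x)) (L' (Hs 0 g x))) := by
    intro κ hκ
    refine Integrable.mono' (hdom κ) ?_ (Filter.Eventually.of_forall fun x => ?_)
    · have hc := (b_conts (A := A) (q := q) hκ ha1).1
      have h1 : Continuous (fun x => (L (Hs 0 f x), L' (Hs 0 g x))) :=
        (L.continuous.comp (Hs 0 f).continuous).prodMk (L'.continuous.comp (Hs 0 g).continuous)
      exact (hc.comp h1).aestronglyMeasurable
    · rw [Real.norm_of_nonneg (bB_nonneg hA0 hκ hq _ _)]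
      exact hle κ hκ x
  have hmain := fun (κ : ℝ) (hκ : 0 < κ) =>
    cal_main hu hv hκ hq hq2 ha hA0 hAA (hbi κ hκ) i j hT
  refine ⟨(hmain 1 one_pos).1, ?_⟩
  have hint : ∀ κ : ℝ, 0 < κ → ∫ t in Set.Ioc 0 T, ∫ x, 2 * (|L (Hs t (∂_{EuclideanSpace.single i (1:ℝ)} f) x)| *
      |L' (Hs t (∂_{EuclideanSpace.single j (1:ℝ)} g) x)|) ≤
      (A + 1) * (∫ x, ‖g x‖ ^ q) + 2 * (∫ x, ‖f x‖ ^ (a + 1)) +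
        (κ ^ 2) ^ ((2 - q) / 2) * ∫ x, ‖f x‖ ^ 2 := by
    intro κ hκ
    refine (hmain κ hκ).2.trans ((integral_mono (hbi κ hκ) (hdom κ) (hle κ hκ)).trans (le_of_eq ?_))
    have hsum : Integrable (fun x => (A + 1) * ‖g x‖ ^ q + 2 * ‖f x‖ ^ (a + 1)) :=
      (hgq.const_mul _).add (hf2.const_mul _)
    rw [integral_add hsum (hff.const_mul _),
      integral_add (hgq.const_mul _) (hf2.const_mul _), integral_const_mul, integral_const_mul,
      integral_const_mul]
  have hF0 : 0 ≤ ∫ x, ‖f x‖ ^ (a + 1) := integral_nonneg fun x => by positivity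
  have hG0 : 0 ≤ ∫ x, ‖g x‖ ^ q := integral_nonneg fun x => by positivity
  have hfin : ∫ t in Set.Ioc 0 T, ∫ x, 2 * (|L (Hs t (∂_{EuclideanSpace.single i (1:ℝ)} f) x)| *
      |L' (Hs t (∂_{EuclideanSpace.single j (1:ℝ)} g) x)|) ≤
      (A + 1) * (∫ x, ‖g x‖ ^ q) + 3 * (∫ x, ‖f x‖ ^ (a + 1)) := by
    rcases hq2.lt_or_eq with h | h
    · have hlim : Filter.Tendsto (fun κ : ℝ => (A + 1) * (∫ x, ‖g x‖ ^ q) +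
          2 * (∫ x, ‖f x‖ ^ (a + 1)) + (κ ^ 2) ^ ((2 - q) / 2) * ∫ x, ‖f x‖ ^ 2)
          (nhdsWithin 0 (Set.Ioi 0)) (nhds ((A + 1) * (∫ x, ‖g x‖ ^ q) +
          2 * (∫ x, ‖f x‖ ^ (a + 1)) + ((0:ℝ) ^ 2) ^ ((2 - q) / 2) * ∫ x, ‖f x‖ ^ 2)) := by
        refine Filter.Tendsto.mono_left (Continuous.tendsto ?_ 0) nhdsWithin_le_nhds
        have : Continuous fun κ : ℝ => (κ ^ 2) ^ ((2 - q) / 2) :=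
          (continuous_pow 2).rpow_const fun x => Or.inr (by linarith)
        fun_prop
      have := ge_of_tendsto hlim (by filter_upwards [self_mem_nhdsWithin] with κ hκ using hint κ hκ)
      rw [zero_pow (by norm_num), Real.zero_rpow (by linarith), zero_mul, add_zero] at this
      linarith
    · have h1 := hint 1 one_pos
      have ha2 : a + 1 = (2 : ℕ) := by rw [ha, h]; norm_num
      rw [ha2] at h1 ⊢
      simp only [Real.rpow_natCast] at h1 ⊢
      simp only [one_pow, Real.one_rpow, one_mul] at h1
      linarith
  refine hfin.trans ?_
  nlinarith [mul_nonneg hA0 hF0, mul_nonneg hA0 hG0]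

noncomputable def muT (N : ℕ) (T : ℝ) : Measure (ℝ × EN N) :=
  (volume.restrict (Set.Ioc 0 T)).prod volume

noncomputable def Xf {N : ℕ} (i : Fin N) (f : 𝓢(EN N, ℂ)) (z : ℝ × EN N) : ℂ :=
  Hs z.1 (∂_{EuclideanSpace.single i (1:ℝ)} f) z.2

lemma Xf_cont {N : ℕ} (i : Fin N) (f : 𝓢(EN N, ℂ)) : Continuous (Xf i f) := Hs_cont _

lemma bil1 (q : ℝ) (hq : 1 < q) (hq2 : q ≤ 2) : ∃ C : ℝ, 0 < C ∧ ∀ (N : ℕ) (f g : 𝓢(EN N, ℂ))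
    (i j : Fin N) (T : ℝ) (_ : 0 ≤ T),
    Integrable (fun z => ‖Xf i f z‖ * ‖Xf j g z‖) (muT N T) ∧
    ∫ z, ‖Xf i f z‖ * ‖Xf j g z‖ ∂(muT N T) ≤
      C * ((∫ x, ‖f x‖ ^ (1 / (q - 1) + 1)) + ∫ x, ‖g x‖ ^ q) := by
  obtain ⟨C, hC, h⟩ := bil0 q hq hq2
  refine ⟨2 * C, by linarith, ?_⟩
  intro N f g i j T hT
  set S := (∫ x, ‖f x‖ ^ (1 / (q - 1) + 1)) + ∫ x, ‖g x‖ ^ q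
  have hre : ∀ z, |Complex.reCLM z| ≤ ‖z‖ := fun z => Complex.abs_re_le_norm z
  have him : ∀ z, |Complex.imCLM z| ≤ ‖z‖ := fun z => Complex.abs_im_le_norm z
  have key : ∀ L L' : ℂ →L[ℝ] ℝ, (∀ z, |L z| ≤ ‖z‖) → (∀ z, |L' z| ≤ ‖z‖) →
      Integrable (fun z => 2 * (|L (Xf i f z)| * |L' (Xf j g z)|)) (muT N T) ∧
      ∫ z, 2 * (|L (Xf i f z)| * |L' (Xf j g z)|) ∂(muT N T) ≤ C * S := by
    intro L L' hL hL'
    obtain ⟨h1, h2⟩ := h N f g L L' hL hL' i j T hT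
    refine ⟨h1, ?_⟩
    unfold muT Xf
    rw [integral_prod _ h1]
    exact h2
  obtain ⟨a1, b1⟩ := key _ _ hre hre
  obtain ⟨a2, b2⟩ := key _ _ hre him
  obtain ⟨a3, b3⟩ := key _ _ him hre
  obtain ⟨a4, b4⟩ := key _ _ him him
  have a12 := a1.add a2
  have a34 := a3.add a4
  have aa := (a12.add a34).const_mul (1/2)
  have hle : ∀ z, ‖Xf i f z‖ * ‖Xf j g z‖ ≤ (1/2) *
      ((2 * (|Complex.reCLM (Xf i f z)| * |Complex.reCLM (Xf j g z)|) +
        2 * (|Complex.reCLM (Xf i f z)| * |Complex.imCLM (Xf j g z)|)) +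
      (2 * (|Complex.imCLM (Xf i f z)| * |Complex.reCLM (Xf j g z)|) +
        2 * (|Complex.imCLM (Xf i f z)| * |Complex.imCLM (Xf j g z)|))) := by
    intro z
    have h1 := Complex.norm_le_abs_re_add_abs_im (Xf i f z)
    have h2 := Complex.norm_le_abs_re_add_abs_im (Xf j g z)
    refine (mul_le_mul h1 h2 (norm_nonneg _) (by positivity)).trans (le_of_eq ?_)
    simp only [Complex.reCLM_apply, Complex.imCLM_apply]
    ring
  have hi : Integrable (fun z => ‖Xf i f z‖ * ‖Xf j g z‖) (muT N T) := by
    refine Integrable.mono' aa ?_ (Filter.Eventually.of_forall fun z => ?_)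
    · have h1 := Xf_cont i f
      have h2 := Xf_cont j g
      exact (h1.norm.mul h2.norm).aestronglyMeasurable
    · rw [Real.norm_of_nonneg (by positivity)]; exact hle z
  refine ⟨hi, (integral_mono hi aa hle).trans ?_⟩
  simp only [Pi.add_apply]
  rw [integral_const_mul, integral_add (by exact a12) (by exact a34), integral_add a1 a2,
    integral_add a3 a4]
  linarith

lemma Hs_smul {N : ℕ} (t : ℝ) (c : ℂ) (f : 𝓢(EN N, ℂ)) : Hs t (c • f) = c • Hs t f := by
  unfold Hs
  rw [FourierTransform.fourier_smul, map_smul, FourierTransform.fourierInv_smul]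

lemma Xf_smul {N : ℕ} (i : Fin N) (c : ℝ) (f : 𝓢(EN N, ℂ)) (z : ℝ × EN N) :
    ‖Xf i ((c : ℂ) • f) z‖ = |c| * ‖Xf i f z‖ := by
  unfold Xf
  rw [LineDeriv.lineDerivOp_smul, Hs_smul, smul_apply, norm_smul, Complex.norm_real,
    Real.norm_eq_abs]

lemma scale_le {N : ℕ} (f : 𝓢(EN N, ℂ)) (p : ℝ) (hp : 0 < p) (δ : ℝ) (hδ : 0 < δ) :
    ∫ x, ‖((((LqNorm volume p f + δ)⁻¹ : ℝ) : ℂ) • f) x‖ ^ p ≤ 1 := by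
  have hI : 0 ≤ ∫ x, ‖f x‖ ^ p := integral_nonneg fun x => by positivity
  have hn : 0 ≤ LqNorm volume p f := Real.rpow_nonneg hI _
  set c := LqNorm volume p f + δ with hc
  have hc0 : 0 < c := by linarith
  have h1 : ∀ x, ‖(((c⁻¹ : ℝ) : ℂ) • f) x‖ ^ p = (c⁻¹) ^ p * ‖f x‖ ^ p := fun x => by
    rw [smul_apply, norm_smul, Complex.norm_real, Real.norm_of_nonneg (by positivity),
      Real.mul_rpow (by positivity) (by positivity)]
  simp only [h1]
  rw [integral_const_mul, Real.inv_rpow hc0.le]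
  have h2 : ∫ x, ‖f x‖ ^ p = (LqNorm volume p f) ^ p := by
    unfold LqNorm
    rw [← Real.rpow_mul hI, one_div_mul_cancel hp.ne', Real.rpow_one]
  rw [h2, inv_mul_le_iff₀ (by positivity), mul_one]
  exact Real.rpow_le_rpow hn (by linarith) hp.le

lemma bil2 (q : ℝ) (hq : 1 < q) (hq2 : q ≤ 2) : ∃ C : ℝ, 0 < C ∧ ∀ (N : ℕ) (f g : 𝓢(EN N, ℂ))
    (i j : Fin N) (T : ℝ) (_ : 0 ≤ T),
    Integrable (fun z => ‖Xf i f z‖ * ‖Xf j g z‖) (muT N T) ∧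
    ∫ z, ‖Xf i f z‖ * ‖Xf j g z‖ ∂(muT N T) ≤
      C * (LqNorm volume (1 / (q - 1) + 1) f * LqNorm volume q g) := by
  obtain ⟨C, hC, h⟩ := bil1 q hq hq2
  refine ⟨2 * C, by linarith, ?_⟩
  intro N f g i j T hT
  refine ⟨(h N f g i j T hT).1, ?_⟩
  have hp : 0 < 1 / (q - 1) + 1 := by
    have : 0 < q - 1 := by linarith
    positivity
  set p := 1 / (q - 1) + 1 with hpdef
  have ha : 0 ≤ LqNorm volume p f := Real.rpow_nonneg (integral_nonneg fun x => by positivity) _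
  have hb : 0 ≤ LqNorm volume q g := Real.rpow_nonneg (integral_nonneg fun x => by positivity) _
  have hδ : ∀ δ : ℝ, 0 < δ → ∫ z, ‖Xf i f z‖ * ‖Xf j g z‖ ∂(muT N T) ≤
      2 * C * ((LqNorm volume p f + δ) * (LqNorm volume q g + δ)) := by
    intro δ hδ
    have h1 := scale_le f p hp δ hδ
    have h2 := scale_le g q (by linarith) δ hδ
    set a := LqNorm volume p f + δ
    set b := LqNorm volume q g + δ
    have ha0 : 0 < a := by linarith
    have hb0 : 0 < b := by linarith
    have h3 := (h N (((a⁻¹ : ℝ) : ℂ) • f) (((b⁻¹ : ℝ) : ℂ) • g) i j T hT).2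
    have h4 : ∀ z, ‖Xf i (((a⁻¹ : ℝ) : ℂ) • f) z‖ * ‖Xf j (((b⁻¹ : ℝ) : ℂ) • g) z‖ =
        (a⁻¹ * b⁻¹) * (‖Xf i f z‖ * ‖Xf j g z‖) := fun z => by
      rw [Xf_smul, Xf_smul, abs_of_pos (inv_pos.2 ha0), abs_of_pos (inv_pos.2 hb0)]; ring
    simp only [h4] at h3
    rw [integral_const_mul, ← mul_inv, inv_mul_le_iff₀ (by positivity)] at h3
    refine h3.trans ?_
    have : C * ((∫ x, ‖(((a⁻¹ : ℝ) : ℂ) • f) x‖ ^ p) + ∫ x, ‖(((b⁻¹ : ℝ) : ℂ) • g) x‖ ^ q) ≤ C * 2 := by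
      apply mul_le_mul_of_nonneg_left _ hC.le; linarith
    have h5 := mul_le_mul_of_nonneg_left this (mul_pos ha0 hb0).le
    linarith
  have hlim : Filter.Tendsto (fun δ : ℝ => 2 * C * ((LqNorm volume p f + δ) * (LqNorm volume q g + δ)))
      (nhdsWithin 0 (Set.Ioi 0))
      (nhds (2 * C * ((LqNorm volume p f + 0) * (LqNorm volume q g + 0)))) := by
    refine Filter.Tendsto.mono_left (Continuous.tendsto ?_ 0) nhdsWithin_le_nhds
    fun_prop
  have := ge_of_tendsto hlim (by filter_upwards [self_mem_nhdsWithin] with κ hκ using hδ κ hκ)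
  simpa using this

lemma bil3 (q : ℝ) (hq : 1 < q) : ∃ C : ℝ, 0 < C ∧ ∀ (N : ℕ) (f g : 𝓢(EN N, ℂ))
    (i j : Fin N) (T : ℝ) (_ : 0 ≤ T),
    Integrable (fun z => ‖Xf i f z‖ * ‖Xf j g z‖) (muT N T) ∧
    ∫ z, ‖Xf i f z‖ * ‖Xf j g z‖ ∂(muT N T) ≤
      C * (LqNorm volume q f * LqNorm volume (q / (q - 1)) g) := by
  have hq1 : 0 < q - 1 := by linarith
  rcases le_total q 2 with h | h
  · obtain ⟨C, hC, h⟩ := bil2 q hq h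
    refine ⟨C, hC, fun N f g i j T hT => ?_⟩
    have := h N g f j i T hT
    have e : 1 / (q - 1) + 1 = q / (q - 1) := by field_simp; ring
    rw [e] at this
    simpa only [mul_comm] using this
  · have hq' : 1 < q / (q - 1) := by rw [lt_div_iff₀ hq1]; linarith
    have hq2 : q / (q - 1) ≤ 2 := by rw [div_le_iff₀ hq1]; linarith
    obtain ⟨C, hC, h⟩ := bil2 (q / (q - 1)) hq' hq2
    refine ⟨C, hC, fun N f g i j T hT => ?_⟩
    have := h N f g i j T hT
    have e : 1 / (q / (q - 1) - 1) + 1 = q := by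
      have : q / (q - 1) - 1 = 1 / (q - 1) := by field_simp; ring
      rw [this]; field_simp; ring
    rwa [e] at this


noncomputable def mm {N : ℕ} (i j : Fin N) (η : EN N) : ℂ := ((η i * η j / ‖η‖ ^ 2 : ℝ) : ℂ)

lemma mm_norm {N : ℕ} (i j : Fin N) (η : EN N) : ‖mm i j η‖ ≤ 1 := by
  unfold mm
  rw [Complex.norm_real, norm_div, norm_mul]
  have h1 := PiLp.norm_apply_le η i
  have h2 := PiLp.norm_apply_le η j
  refine div_le_one_of_le₀ ?_ (norm_nonneg _)
  rw [Real.norm_of_nonneg (sq_nonneg ‖η‖), sq]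
  exact mul_le_mul h1 h2 (norm_nonneg _) (norm_nonneg _)

lemma mm_mul {N : ℕ} (i j : Fin N) (η : EN N) : mm i j η * ((‖η‖ ^ 2 : ℝ) : ℂ) = (η i : ℂ) * (η j : ℂ) := by
  unfold mm
  rcases eq_or_ne η 0 with h | h
  · simp [h]
  · have : ‖η‖ ^ 2 ≠ 0 := by positivity
    rw [← Complex.ofReal_mul, div_mul_cancel₀ _ this]; push_cast; rfl

lemma mm_meas {N : ℕ} (i j : Fin N) : Measurable (mm (N := N) i j) := by
  unfold mm
  have h1 : Measurable (fun η : EN N => η i) := (EuclideanSpace.proj (𝕜 := ℝ) i).continuous.measurable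
  have h2 : Measurable (fun η : EN N => η j) := (EuclideanSpace.proj (𝕜 := ℝ) j).continuous.measurable
  fun_prop

lemma inv_eq_neg {N : ℕ} (g : 𝓢(EN N, ℂ)) (η : EN N) : 𝓕⁻ g η = 𝓕 g (-η) := by
  rw [SchwartzMap.fourierInv_coe, SchwartzMap.fourier_coe, Real.fourierInv_eq_fourier_neg]

lemma hg_neg {N : ℕ} (t : ℝ) (η : EN N) : hg t (-η) = hg t η := by unfold hg; rw [norm_neg]

lemma hg_sq {N : ℕ} (t : ℝ) (η : EN N) : hg t η * hg t η = hg (2 * t) η := by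
  unfold hg
  have : max (2 * t) 0 = 2 * max t 0 := by
    rw [mul_max_of_nonneg _ _ (by norm_num : (0:ℝ) ≤ 2), mul_zero]
  rw [← Complex.ofReal_mul, ← Real.exp_add, this]
  congr 2; ring

lemma hg_cont1 {N : ℕ} (s : ℝ) : Continuous (fun η : EN N => hg s η) :=
      hg_cont.comp (Continuous.prodMk continuous_const continuous_id)

lemma pairF {N : ℕ} (f g : 𝓢(EN N, ℂ)) : ∫ x, f x * g x = ∫ η, 𝓕 f η * 𝓕⁻ g η := by
  have := SchwartzMap.integral_fourier_mul_eq f (𝓕⁻ g)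
  rw [this]; simp

lemma pair_x {N : ℕ} (i j : Fin N) (f g : 𝓢(EN N, ℂ)) (t : ℝ) :
    ∫ x, Xf i f (t, x) * Xf j g (t, x) =
      ∫ η, mm i j η * (((4 * π ^ 2 * ‖η‖ ^ 2 : ℝ) : ℂ) * hg (2 * t) η) * (𝓕 f η * 𝓕⁻ g η) := by
  unfold Xf
  simp only []
  rw [pairF]
  refine integral_congr_ae (Filter.Eventually.of_forall fun η => ?_)
  have e : mm i j η * (((4 * π ^ 2 * ‖η‖ ^ 2 : ℝ) : ℂ) * hg (2 * t) η) * (𝓕 f η * 𝓕⁻ g η)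
    = (mm i j η * ((‖η‖ ^ 2 : ℝ) : ℂ)) * (4 * π ^ 2 * hg (2 * t) η) * (𝓕 f η * 𝓕⁻ g η) := by
    push_cast; ring
  simp only [inv_eq_neg] at *
  rw [e, mm_mul, ← hg_sq]
  simp only [Hs_four, four_ld, hg_neg, EuclideanSpace.inner_single_right]
  simp
  ring_nf
  simp [Complex.I_sq]

noncomputable def JJ {N : ℕ} (i j : Fin N) (f g : 𝓢(EN N, ℂ)) (t : ℝ) : ℂ :=
  ∫ η, mm i j η * hg (2 * t) η * (𝓕 f η * 𝓕⁻ g η)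

lemma PP_int {N : ℕ} (f g : 𝓢(EN N, ℂ)) (k : ℕ) : Integrable (fun η => ‖η‖ ^ k * ‖𝓕 f η * 𝓕⁻ g η‖) := by
  obtain ⟨M, hM⟩ := (𝓕⁻ g).decay 0 0
  have hM2 : ∀ η, ‖𝓕⁻ g η‖ ≤ M := fun η => by simpa using hM.2 η
  refine Integrable.mono' (((𝓕 f).integrable_pow_mul volume k).const_mul M) ?_
    (Filter.Eventually.of_forall fun η => ?_)
  · have h1 := (𝓕 f).continuous
    have h2 := (𝓕⁻ g).continuous
    refine Continuous.aestronglyMeasurable ?_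
    fun_prop
  · rw [Real.norm_of_nonneg (by positivity), norm_mul]
    have := mul_le_mul_of_nonneg_left (hM2 η) (by positivity : 0 ≤ ‖η‖ ^ k * ‖𝓕 f η‖)
    linarith

lemma PP_cont {N : ℕ} (f g : 𝓢(EN N, ℂ)) : Continuous (fun η => 𝓕 f η * 𝓕⁻ g η) :=
  (𝓕 f).continuous.mul (𝓕⁻ g).continuous

lemma JJ_meas {N : ℕ} (i j : Fin N) (f g : 𝓢(EN N, ℂ)) (t : ℝ) :
    AEStronglyMeasurable (fun η => mm i j η * hg t η * (𝓕 f η * 𝓕⁻ g η)) := by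
  refine Measurable.aestronglyMeasurable ?_
  exact ((mm_meas i j).mul (hg_cont1 t).measurable).mul (PP_cont f g).measurable

lemma JJ_le {N : ℕ} (i j : Fin N) (f g : 𝓢(EN N, ℂ)) (t : ℝ) (η : EN N) :
    ‖mm i j η * hg t η * (𝓕 f η * 𝓕⁻ g η)‖ ≤ ‖η‖ ^ 0 * ‖𝓕 f η * 𝓕⁻ g η‖ := by
  rw [norm_mul, norm_mul, pow_zero]
  exact mul_le_mul_of_nonneg_right
    (mul_le_one₀ (mm_norm i j η) (norm_nonneg _) (hg_norm t η)) (norm_nonneg _)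

lemma JJ_deriv {N : ℕ} (i j : Fin N) (f g : 𝓢(EN N, ℂ)) (t : ℝ) (ht : 0 < t) :
    HasDerivAt (JJ i j f g) (-2 * ∫ x, Xf i f (t, x) * Xf j g (t, x)) t := by
  have key := hasDerivAt_integral_of_dominated_loc_of_deriv_le (μ := volume)
    (F := fun s η => mm i j η * hg (2 * s) η * (𝓕 f η * 𝓕⁻ g η))
    (F' := fun s η => mm i j η * ((2:ℝ) • (-(4 * π ^ 2 * ‖η‖ ^ 2 : ℝ) * hg (2 * s) η)) * (𝓕 f η * 𝓕⁻ g η))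
    (bound := fun η => (8 * π ^ 2) * (‖η‖ ^ 2 * ‖𝓕 f η * 𝓕⁻ g η‖)) (x₀ := t) (s := Set.Ioi 0)
    (Ioi_mem_nhds ht) ?_ ?_ ?_ ?_ ?_ ?_
  · refine key.2.congr_deriv ?_
    rw [pair_x, ← integral_const_mul]
    refine integral_congr_ae (Filter.Eventually.of_forall fun η => ?_)
    simp only [Complex.real_smul]
    push_cast; ring
  · exact Filter.Eventually.of_forall fun s => JJ_meas i j f g _
  · exact Integrable.mono' (PP_int f g 0) (JJ_meas i j f g _)
      (Filter.Eventually.of_forall fun η => JJ_le i j f g _ η)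
  · refine Measurable.aestronglyMeasurable ?_
    have h1 := mm_meas (N := N) i j
    have h2 := (hg_cont1 (N := N) (2 * t)).measurable
    have h3 := (PP_cont f g).measurable
    simp only [Complex.real_smul]
    refine (h1.mul (measurable_const.mul (Measurable.mul ?_ h2))).mul h3
    exact Measurable.neg (by fun_prop)
  · refine Filter.Eventually.of_forall fun η s _ => ?_
    rw [norm_mul, norm_mul, norm_smul, norm_mul, norm_neg, Complex.norm_real,
      Real.norm_of_nonneg (by positivity : 0 ≤ 4 * π ^ 2 * ‖η‖ ^ 2), ← mul_assoc (8 * π ^ 2)]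
    refine mul_le_mul_of_nonneg_right ?_ (norm_nonneg _)
    have h1 : 4 * π ^ 2 * ‖η‖ ^ 2 * ‖hg (2 * s) η‖ ≤ 4 * π ^ 2 * ‖η‖ ^ 2 :=
      mul_le_of_le_one_right (by positivity) (hg_norm _ η)
    refine (mul_le_of_le_one_left (by positivity) (mm_norm i j η)).trans ?_
    rw [Real.norm_of_nonneg (by norm_num)]
    linarith
  · exact (PP_int f g 2).const_mul _
  · refine Filter.Eventually.of_forall fun η s hs => ?_
    have hs' : 0 < 2 * s := mul_pos two_pos hs
    have h1 : HasDerivAt (fun r : ℝ => 2 * r) 2 s := by simpa using (hasDerivAt_id s).const_mul (2:ℝ)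
    have h2 := (hg_deriv (2 * s) hs' η).scomp s h1
    exact (h2.const_mul _).mul_const _

lemma JJ_lim {N : ℕ} (i j : Fin N) (f g : 𝓢(EN N, ℂ)) :
    Filter.Tendsto (JJ i j f g) Filter.atTop (nhds 0) := by
  have h := tendsto_integral_filter_of_dominated_convergence (μ := volume) (l := Filter.atTop)
    (F := fun (t : ℝ) η => mm i j η * hg (2 * t) η * (𝓕 f η * 𝓕⁻ g η)) (f := fun _ => 0)
    (fun η => ‖η‖ ^ 0 * ‖𝓕 f η * 𝓕⁻ g η‖)
    (Filter.Eventually.of_forall fun s => JJ_meas i j f g _)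
    (Filter.Eventually.of_forall fun s => Filter.Eventually.of_forall fun η => JJ_le i j f g _ η)
    (PP_int f g 0) (Filter.Eventually.of_forall fun η => ?_)
  · rw [integral_zero] at h
    exact h
  · rcases eq_or_ne η 0 with h | h
    · simp [h, mm]
    · have h1 : Filter.Tendsto (fun t : ℝ => hg (2 * t) η) Filter.atTop (nhds 0) := by
        unfold hg
        have hn : 0 < ‖η‖ ^ 2 := by positivity
        rw [show (0:ℂ) = ((0:ℝ) : ℂ) by simp]
        refine (Complex.continuous_ofReal.tendsto 0).comp ?_
        refine Real.tendsto_exp_atBot.comp ?_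
        have : Filter.Tendsto (fun t : ℝ => (-(8 * π ^ 2 * ‖η‖ ^ 2)) * t) Filter.atTop Filter.atBot :=
          Filter.tendsto_id.const_mul_atTop_of_neg (by
            have : 0 < 8 * π ^ 2 * ‖η‖ ^ 2 := by positivity
            linarith)
        refine this.congr' ?_
        filter_upwards [Filter.eventually_ge_atTop 0] with t ht
        rw [max_eq_left (by linarith)]; ring
      have := (h1.const_mul (mm i j η)).mul_const (𝓕 f η * 𝓕⁻ g η)
      simpa using this

lemma bil4 (q : ℝ) (hq : 1 < q) : ∃ C : ℝ, 0 < C ∧ ∀ (N : ℕ) (f g : 𝓢(EN N, ℂ))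
    (i j : Fin N) (ε : ℝ) (_ : 0 < ε),
    ‖∫ η, mm i j η * hg ε η * (𝓕 f η * 𝓕⁻ g η)‖ ≤
      C * (LqNorm volume q f * LqNorm volume (q / (q - 1)) g) := by
  obtain ⟨C, hC, h⟩ := bil3 q hq
  refine ⟨2 * C, by linarith, fun N f g i j ε hε => ?_⟩
  set K := LqNorm volume q f * LqNorm volume (q / (q - 1)) g with hK
  have hJ : ∫ η, mm i j η * hg ε η * (𝓕 f η * 𝓕⁻ g η) = JJ i j f g (ε / 2) := by
    unfold JJ; rw [show 2 * (ε / 2) = ε by ring]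
  rw [hJ]
  have hT : ∀ T, ε / 2 ≤ T → ‖JJ i j f g T - JJ i j f g (ε / 2)‖ ≤ 2 * C * K := by
    intro T hT
    have hT0 : 0 ≤ T := by linarith
    obtain ⟨hi, hb⟩ := h N f g i j T hT0
    have hXm : AEStronglyMeasurable (fun z => Xf i f z * Xf j g z) (muT N T) :=
      ((Xf_cont i f).mul (Xf_cont j g)).aestronglyMeasurable
    have hi2 : Integrable (fun z => Xf i f z * Xf j g z) (muT N T) := by
      refine Integrable.mono' hi hXm (Filter.Eventually.of_forall fun z => ?_)
      rw [norm_mul]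
    have hi3 : IntegrableOn (fun t => ∫ x, Xf i f (t, x) * Xf j g (t, x)) (Set.Ioc 0 T) :=
      hi2.integral_prod_left
    have hn3 : IntegrableOn (fun t => ∫ x, ‖Xf i f (t, x)‖ * ‖Xf j g (t, x)‖) (Set.Ioc 0 T) :=
      hi.integral_prod_left
    have hsub : Set.Ioc (ε / 2) T ⊆ Set.Ioc 0 T := Set.Ioc_subset_Ioc_left (by linarith)
    have hftc := intervalIntegral.integral_eq_sub_of_hasDerivAt (a := ε / 2) (b := T)
      (f := JJ i j f g) (f' := fun t => -2 * ∫ x, Xf i f (t, x) * Xf j g (t, x))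
      (fun t ht => JJ_deriv i j f g t (by
        rw [Set.uIcc_of_le hT] at ht; linarith [ht.1])) (by
        rw [intervalIntegrable_iff_integrableOn_Ioc_of_le hT]
        exact (hi3.mono_set hsub).const_mul _)
    rw [← hftc, intervalIntegral.integral_of_le hT, integral_const_mul, norm_mul]
    have h5 : ‖∫ t in Set.Ioc (ε / 2) T, ∫ x, Xf i f (t, x) * Xf j g (t, x)‖ ≤ C * K := by
      refine le_trans ?_ hb
      unfold muT
      rw [integral_prod _ hi]
      refine (norm_integral_le_of_norm_le (hn3.mono_set hsub)
        (Filter.Eventually.of_forall fun t => ?_)).trans ?_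
      · refine (norm_integral_le_integral_norm _).trans (le_of_eq ?_)
        simp only [norm_mul]
      · refine setIntegral_mono_set hn3 ?_ hsub.eventuallyLE
        exact Filter.Eventually.of_forall fun t => integral_nonneg fun x => by positivity
    have : ‖(-2 : ℂ)‖ = 2 := by simp
    rw [this]; linarith
  have hl : Filter.Tendsto (fun T => ‖JJ i j f g T - JJ i j f g (ε / 2)‖) Filter.atTop
      (nhds ‖0 - JJ i j f g (ε / 2)‖) := ((JJ_lim i j f g).sub_const _).norm
  have := le_of_tendsto hl (by filter_upwards [Filter.eventually_ge_atTop (ε/2)] with T h using hT T h)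
  simpa using this


lemma LqNorm_eq {α : Type*} [MeasurableSpace α] {μ : Measure α} {E : Type*} [NormedAddCommGroup E]
    {f : α → E} {p : ℝ} (hp : 0 < p) (hf : MemLp f (ENNReal.ofReal p) μ) :
    LqNorm μ p f = (eLpNorm f (ENNReal.ofReal p) μ).toReal := by
  rw [MemLp.eLpNorm_eq_integral_rpow_norm (by simpa using hp) ENNReal.ofReal_ne_top hf,
    ENNReal.toReal_ofReal hp.le, ENNReal.toReal_ofReal, LqNorm, one_div]
  exact Real.rpow_nonneg (integral_nonneg fun x => by positivity) _

lemma LqNorm_nonneg {α : Type*} [MeasurableSpace α] {μ : Measure α} {E : Type*} [NormedAddCommGroup E]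
    (f : α → E) (p : ℝ) : 0 ≤ LqNorm μ p f :=
  Real.rpow_nonneg (integral_nonneg fun x => by positivity) _

lemma memLp_of_rpow {α : Type*} [MeasurableSpace α] {μ : Measure α} {E : Type*} [NormedAddCommGroup E]
    {f : α → E} {p : ℝ} (hp : 0 < p) (hm : AEStronglyMeasurable f μ)
    (hf : Integrable (fun x => ‖f x‖ ^ p) μ) : MemLp f (ENNReal.ofReal p) μ := by
  rw [← integrable_norm_rpow_iff hm (by simpa using hp) ENNReal.ofReal_ne_top,
    ENNReal.toReal_ofReal hp.le]
  exact hf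

lemma LqNorm_add_le {α : Type*} [MeasurableSpace α] {μ : Measure α} {E : Type*} [NormedAddCommGroup E]
    {f g : α → E} {p : ℝ} (hp : 1 ≤ p) (hf : MemLp f (ENNReal.ofReal p) μ)
    (hg : MemLp g (ENNReal.ofReal p) μ) :
    LqNorm μ p (fun x => f x + g x) ≤ LqNorm μ p f + LqNorm μ p g := by
  have hp0 : 0 < p := by linarith
  have hfg : MemLp (fun x => f x + g x) (ENNReal.ofReal p) μ := hf.add hg
  rw [LqNorm_eq hp0 hf, LqNorm_eq hp0 hg, LqNorm_eq hp0 hfg,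
    ← ENNReal.toReal_add hf.eLpNorm_ne_top hg.eLpNorm_ne_top]
  refine ENNReal.toReal_mono (ENNReal.add_ne_top.2 ⟨hf.eLpNorm_ne_top, hg.eLpNorm_ne_top⟩) ?_
  exact eLpNorm_add_le hf.1 hg.1 (by simpa using hp)

lemma holder {N : ℕ} {q q' : ℝ} (hqq : q.HolderConjugate q') {w g : EN N → ℂ}
    (hw : MemLp w (ENNReal.ofReal q)) (hg : MemLp g (ENNReal.ofReal q')) :
    Integrable (fun x => w x * g x) ∧ ‖∫ x, w x * g x‖ ≤ LqNorm volume q w * LqNorm volume q' g := by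
  have h := integral_mul_norm_le_Lp_mul_Lq hqq hw hg
  have : ENNReal.HolderConjugate (ENNReal.ofReal q) (ENNReal.ofReal q') := hqq.ennrealOfReal
  refine ⟨MemLp.integrable_mul hw hg, ?_⟩
  refine (norm_integral_le_integral_norm _).trans ?_
  simp only [norm_mul]
  exact h

lemma dual_main {N : ℕ} {q : ℝ} (hq : 1 < q) {w : EN N → ℂ} (hw : Continuous w)
    (hwq : Integrable (fun x => ‖w x‖ ^ q)) {K : ℝ} (hK : 0 ≤ K)
    (h : ∀ g : 𝓢(EN N, ℂ), ‖∫ x, w x * g x‖ ≤ K * LqNorm volume (q / (q - 1)) g) :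
    LqNorm volume q w ≤ K := by
  set q' := q / (q - 1) with hq'
  have hq1 : 0 < q - 1 := by linarith
  have hqq : q.HolderConjugate q' := Real.HolderConjugate.conjExponent hq
  have hq'1 : 1 < q' := by rw [hq', lt_div_iff₀ hq1]; linarith
  have hwm := memLp_of_rpow (by linarith) hw.aestronglyMeasurable hwq
  set g0 : EN N → ℂ := fun x => ((‖w x‖ ^ (q - 2) : ℝ) : ℂ) * (starRingEnd ℂ) (w x) with hg0
  have hg0n : ∀ x, ‖g0 x‖ = ‖w x‖ ^ (q - 1) := by
    intro x
    simp only [hg0, norm_mul, Complex.norm_real, RCLike.norm_conj]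
    rcases eq_or_ne (w x) 0 with h0 | h0
    · simp [h0, Real.zero_rpow hq1.ne']
    · have : 0 < ‖w x‖ := by positivity
      rw [Real.norm_of_nonneg (by positivity), ← Real.rpow_add_one this.ne']
      congr 1; ring
  have hg0q : ∀ x, ‖g0 x‖ ^ q' = ‖w x‖ ^ q := by
    intro x
    rw [hg0n, ← Real.rpow_mul (norm_nonneg _)]
    congr 1; rw [hq']; field_simp
  have hwg : ∀ x, w x * g0 x = ((‖w x‖ ^ q : ℝ) : ℂ) := by
    intro x
    have : w x * g0 x = ((‖w x‖ ^ (q - 2) : ℝ) : ℂ) * (w x * (starRingEnd ℂ) (w x)) := by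
      simp only [hg0]; ring
    rw [this, Complex.mul_conj, Complex.normSq_eq_norm_sq, ← Complex.ofReal_mul]
    congr 1
    rcases eq_or_ne (w x) 0 with h0 | h0
    · simp [h0, Real.zero_rpow (by linarith : q ≠ 0)]
    · have : 0 < ‖w x‖ := by positivity
      rw [← Real.rpow_natCast, ← Real.rpow_add this]
      congr 1; norm_num
  have hg0m : AEStronglyMeasurable g0 := by
    have := hw.measurable
    refine Measurable.aestronglyMeasurable ?_
    have h2 : Measurable (fun x => (starRingEnd ℂ) (w x)) := (Complex.continuous_conj.comp hw).measurable
    have h3 : Measurable (fun x => ‖w x‖ ^ (q - 2)) := this.norm.pow_const _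
    exact (Complex.measurable_ofReal.comp h3).mul h2
  have hg0p : MemLp g0 (ENNReal.ofReal q') :=
    memLp_of_rpow (by linarith) hg0m (by simpa only [hg0q] using hwq)
  set I := ∫ x, ‖w x‖ ^ q with hI
  have hI0 : 0 ≤ I := integral_nonneg fun x => by positivity
  have hLw : LqNorm volume q w = I ^ (1 / q) := rfl
  have hLg : LqNorm volume q' g0 = I ^ (1 / q') := by
    unfold LqNorm; simp only [hg0q]; rfl
  have hIw : ∫ x, w x * g0 x = (I : ℂ) := by
    simp only [hwg]; exact integral_ofReal
  have hδ : ∀ δ : ℝ, 0 < δ → I ≤ K * (I ^ (1 / q') + δ) + I ^ (1 / q) * δ := by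
    intro δ hδ
    obtain ⟨g, hg1, hg2, hg3⟩ := MemLp.exist_eLpNorm_sub_le (ENNReal.ofReal_ne_top (r := q'))
      (by simpa using hq'1.le) hg0p hδ
    set G : 𝓢(EN N, ℂ) := hg1.toSchwartzMap hg2 with hG
    have hGg : (G : EN N → ℂ) = g := rfl
    have hGm : MemLp G (ENNReal.ofReal q') := G.memLp _ _
    have hdm : MemLp (g0 - ⇑G) (ENNReal.ofReal q') := hg0p.sub hGm
    have hdn : LqNorm volume q' (g0 - ⇑G) ≤ δ := by
      rw [LqNorm_eq (by linarith) hdm, hGg]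
      exact ENNReal.toReal_le_of_le_ofReal hδ.le hg3
    have hGn : LqNorm volume q' G ≤ I ^ (1 / q') + δ := by
      have e : (fun x => g0 x + (-(g0 - ⇑G)) x) = G := by
        funext x; simp
      have := LqNorm_add_le hq'1.le hg0p hdm.neg
      rw [e] at this
      have e2 : LqNorm volume q' (-(g0 - ⇑G)) = LqNorm volume q' (g0 - ⇑G) := by
        unfold LqNorm; simp only [Pi.neg_apply, norm_neg]
      rw [e2, hLg] at this
      linarith
    obtain ⟨i1, b1⟩ := holder hqq hwm hGm
    obtain ⟨i2, b2⟩ := holder hqq hwm hdm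
    have hsum : (I : ℂ) = (∫ x, w x * G x) + ∫ x, w x * (g0 - ⇑G) x := by
      rw [← integral_add i1 i2, ← hIw]
      congr 1; funext x; simp only [Pi.sub_apply]; ring
    have h1 : I = ‖(I : ℂ)‖ := by rw [Complex.norm_real, Real.norm_of_nonneg hI0]
    refine (h1.le.trans ((congrArg norm hsum).le.trans (norm_add_le _ _))).trans (add_le_add ?_ ?_)
    · exact (h G).trans (mul_le_mul_of_nonneg_left hGn hK)
    · exact b2.trans (mul_le_mul_of_nonneg_left hdn (LqNorm_nonneg _ _))
  have hlim : Filter.Tendsto (fun δ : ℝ => K * (I ^ (1 / q') + δ) + I ^ (1 / q) * δ)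
      (nhdsWithin 0 (Set.Ioi 0))
      (nhds (K * (I ^ (1 / q') + 0) + I ^ (1 / q) * 0)) := by
    refine Filter.Tendsto.mono_left (Continuous.tendsto ?_ 0) nhdsWithin_le_nhds
    fun_prop
  have hfin := ge_of_tendsto hlim (by filter_upwards [self_mem_nhdsWithin] with κ hκ using hδ κ hκ)
  rw [add_zero, mul_zero, add_zero] at hfin
  rw [hLw]
  rcases hI0.eq_or_lt with h0 | h0
  · rw [← h0, Real.zero_rpow (by positivity)]; exact hK
  · have h2 : 0 < I ^ (1 / q') := Real.rpow_pos_of_pos h0 _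
    have h3 : I = I ^ (1 / q) * I ^ (1 / q') := by
      rw [← Real.rpow_add h0]
      have : 1 / q + 1 / q' = 1 := by rw [hq']; field_simp; ring
      rw [this, Real.rpow_one]
    rw [h3] at hfin
    have h4 : I ^ (1 / q) * I ^ (1 / q') ≤ K * I ^ (1 / q') := by rwa [← h3] at hfin ⊢
    exact le_of_mul_le_mul_right h4 h2


lemma finv_eq {N : ℕ} (φ : EN N → ℂ) (x : EN N) :
    𝓕⁻ φ x = VectorFourier.fourierIntegral 𝐞 volume (-innerSL ℝ : EN N →L[ℝ] EN N →L[ℝ] ℝ).toLinearMap₁₂ φ x := by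
  rw [Real.fourierInv_eq]
  simp only [VectorFourier.fourierIntegral]
  refine integral_congr_ae (Filter.Eventually.of_forall fun v => ?_)
  simp

lemma finv_pair {N : ℕ} (φ : EN N → ℂ) (hφ : Integrable φ) (g : 𝓢(EN N, ℂ)) :
    ∫ x, 𝓕⁻ φ x * g x = ∫ η, φ η * 𝓕⁻ g η := by
  have h := VectorFourier.integral_bilin_fourierIntegral_eq_flip (μ := (volume : Measure (EN N)))
    (ν := (volume : Measure (EN N))) (ContinuousLinearMap.mul ℂ ℂ)
    (L := (-innerSL ℝ : EN N →L[ℝ] EN N →L[ℝ] ℝ).toLinearMap₁₂) Real.continuous_fourierChar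
    (by simp only [ContinuousLinearMap.toLinearMap₁₂_apply]; simp; fun_prop) hφ g.integrable
  simp only [ContinuousLinearMap.mul_apply'] at h
  simp only [finv_eq]
  rw [h]
  refine integral_congr_ae (Filter.Eventually.of_forall fun v => ?_)
  simp only
  congr 1
  rw [SchwartzMap.fourierInv_coe, finv_eq]
  simp only [VectorFourier.fourierIntegral]
  refine integral_congr_ae (Filter.Eventually.of_forall fun w => ?_)
  simp [real_inner_comm]

lemma finv_hasF {N : ℕ} (φ : EN N → ℂ) (hφ : Integrable φ) (hφ1 : Integrable (fun v => ‖v‖ * ‖φ v‖))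
    (x : EN N) : DifferentiableAt ℝ (𝓕⁻ φ) x ∧
    ∀ v, fderiv ℝ (𝓕⁻ φ) x v = 𝓕⁻ (fun η : EN N => (2 * π * Complex.I) * (⟪η, v⟫ : ℂ) * φ η) x := by
  have h := VectorFourier.hasFDerivAt_fourierIntegral (-innerSL ℝ : EN N →L[ℝ] EN N →L[ℝ] ℝ) hφ hφ1 x
  have e : 𝓕⁻ φ = VectorFourier.fourierIntegral 𝐞 volume (-innerSL ℝ : EN N →L[ℝ] EN N →L[ℝ] ℝ).toLinearMap₁₂ φ :=
    funext (finv_eq φ)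
  rw [← e] at h
  refine ⟨h.differentiableAt, fun v => ?_⟩
  rw [h.fderiv, finv_eq]
  simp only [VectorFourier.fourierIntegral]
  rw [ContinuousLinearMap.integral_apply]
  · refine integral_congr_ae (Filter.Eventually.of_forall fun w => ?_)
    simp [Circle.smul_def, innerSL_apply_apply]
    rw [innerSL_apply_apply, innerSL_apply_apply]
    ring
  · have : Integrable (VectorFourier.fourierSMulRight (-innerSL ℝ : EN N →L[ℝ] EN N →L[ℝ] ℝ) φ) :=
      (hφ1.const_mul (2 * π * ‖(-innerSL ℝ : EN N →L[ℝ] EN N →L[ℝ] ℝ)‖)).mono'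
        hφ.1.fourierSMulRight (Filter.Eventually.of_forall fun v =>
          (VectorFourier.norm_fourierSMulRight_le _ φ v).trans_eq (by ring))
    rw [VectorFourier.fourierIntegral_convergent_iff Real.continuous_fourierChar
      (by simp only [ContinuousLinearMap.toLinearMap₁₂_apply]; simp; fun_prop)]
    exact this

lemma finv_smooth {N : ℕ} (φ : EN N → ℂ) (hφ : ∀ n : ℕ, Integrable (fun v => ‖v‖ ^ n * ‖φ v‖)) :
    ContDiff ℝ (⊤ : ℕ∞) (𝓕⁻ φ) := by
  have e : 𝓕⁻ φ = VectorFourier.fourierIntegral 𝐞 volume (-innerSL ℝ : EN N →L[ℝ] EN N →L[ℝ] ℝ).toLinearMap₁₂ φ :=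
    funext (finv_eq φ)
  rw [e]
  exact VectorFourier.contDiff_fourierIntegral _ fun n _ => hφ n

lemma inv_norm_int {N : ℕ} (hN : 2 ≤ N) : IntegrableOn (fun x : EN N => ‖x‖⁻¹) (Metric.ball 0 1) := by
  have : Nontrivial (EN N) := by
    have : Nonempty (Fin N) := ⟨⟨0, by omega⟩⟩
    unfold EN; infer_instance
  rw [integrableOn_fun_norm_addHaar volume (f := fun y => y⁻¹)]
  have : IntegrableOn (fun y : ℝ => y ^ (N - 2)) (Set.Ioo 0 1) :=
    ((continuous_pow _).integrableOn_Icc (a := (0:ℝ)) (b := 1)).mono_set Set.Ioo_subset_Icc_self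
  refine this.congr_fun (fun y hy => ?_) measurableSet_Ioo
  obtain ⟨k, rfl⟩ : ∃ k, N = k + 2 := ⟨N - 2, by omega⟩
  simp only [finrank_euclideanSpace, Fintype.card_fin, smul_eq_mul]
  have : y ≠ 0 := hy.1.ne'
  show y ^ k = y ^ (k + 1) * y⁻¹
  field_simp
  ring

lemma inv_sch_int {N : ℕ} (hN : 2 ≤ N) (f : 𝓢(EN N, ℂ)) : Integrable (fun x : EN N => ‖x‖⁻¹ * ‖f x‖) := by
  obtain ⟨C, hC, hCf⟩ : ∃ C, 0 ≤ C ∧ ∀ x, ‖f x‖ ≤ C := by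
    obtain ⟨C, hC⟩ := f.decay 0 0
    exact ⟨C, hC.1.le, fun x => by simpa using hC.2 x⟩
  have h1 : Integrable ((Metric.ball (0 : EN N) 1).indicator (fun x => ‖x‖⁻¹ * C)) :=
    IntegrableOn.integrable_indicator (Integrable.mul_const (inv_norm_int hN) C) measurableSet_ball
  refine (h1.add f.integrable.norm).mono' ?_ (Filter.Eventually.of_forall fun x => ?_)
  · exact (measurable_norm.inv.mul f.continuous.norm.measurable).aestronglyMeasurable
  · rw [Real.norm_of_nonneg (by positivity)]
    simp only [Pi.add_apply]
    by_cases hx : x ∈ Metric.ball (0 : EN N) 1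
    · rw [Set.indicator_of_mem hx]
      have := mul_le_mul_of_nonneg_left (hCf x) (inv_nonneg.2 (norm_nonneg x))
      linarith [norm_nonneg (f x)]
    · rw [Set.indicator_of_notMem hx]
      have h1 : 1 ≤ ‖x‖ := by simpa using hx
      have := mul_le_mul_of_nonneg_right (inv_le_one_of_one_le₀ h1) (norm_nonneg (f x))
      linarith


noncomputable def phiU {N : ℕ} (ε : ℝ) (G : Fin N → 𝓢(EN N, ℂ)) (η : EN N) : ℂ :=
  ∑ j : Fin N, (-(Complex.I / (2 * π))) * ((η j / ‖η‖ ^ 2 : ℝ) : ℂ) * hg ε η * G j η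

noncomputable def psiU {N : ℕ} (ε : ℝ) (G : Fin N → 𝓢(EN N, ℂ)) (i : Fin N) (η : EN N) : ℂ :=
  ∑ j : Fin N, mm i j η * hg ε η * G j η

lemma phiU_meas {N : ℕ} (ε : ℝ) (G : Fin N → 𝓢(EN N, ℂ)) : Measurable (phiU ε G) := by
  unfold phiU
  refine Finset.measurable_sum _ fun j _ => ?_
  have h1 := (hg_cont1 (N := N) ε).measurable
  have h2 := (G j).continuous.measurable
  have h3 : Measurable (fun η : EN N => η j / ‖η‖ ^ 2) :=
    (by fun_prop : Continuous fun η : EN N => η j).measurable.div (by fun_prop)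
  exact (((Complex.measurable_ofReal.comp h3).const_mul _).mul h1).mul h2

lemma psiU_meas {N : ℕ} (ε : ℝ) (G : Fin N → 𝓢(EN N, ℂ)) (i : Fin N) : Measurable (psiU ε G i) := by
  unfold psiU
  refine Finset.measurable_sum _ fun j _ => ?_
  have h1 := (hg_cont1 (N := N) ε).measurable
  have h2 := (G j).continuous.measurable
  exact ((mm_meas i j).mul h1).mul h2

lemma phiU_norm {N : ℕ} (ε : ℝ) (G : Fin N → 𝓢(EN N, ℂ)) (η : EN N) :
    ‖phiU ε G η‖ ≤ ∑ j : Fin N, ‖η‖⁻¹ * ‖G j η‖ := by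
  refine (norm_sum_le _ _).trans (Finset.sum_le_sum fun j _ => ?_)
  rw [norm_mul, norm_mul, norm_mul]
  refine mul_le_mul_of_nonneg_right ?_ (norm_nonneg _)
  have h1 : ‖(-(Complex.I / (2 * π)) : ℂ)‖ ≤ 1 := by
    rw [norm_neg, norm_div, Complex.norm_I, norm_mul, Complex.norm_real, Real.norm_of_nonneg pi_pos.le]
    simp only [Complex.norm_ofNat]
    rw [div_le_one (by positivity)]
    linarith [Real.pi_gt_three]
  have h2 : ‖((η j / ‖η‖ ^ 2 : ℝ) : ℂ)‖ ≤ ‖η‖⁻¹ := by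
    rw [Complex.norm_real, norm_div, Real.norm_of_nonneg (sq_nonneg ‖η‖)]
    rcases eq_or_ne η 0 with h | h
    · simp [h]
    · have := norm_pos_iff.2 h
      rw [div_le_iff₀ (by positivity), sq, inv_mul_cancel_left₀ this.ne']
      exact PiLp.norm_apply_le η j
  calc _ ≤ 1 * ‖η‖⁻¹ * 1 := by gcongr; exact hg_norm _ _
    _ = _ := by ring

lemma psiU_norm {N : ℕ} (ε : ℝ) (G : Fin N → 𝓢(EN N, ℂ)) (i : Fin N) (η : EN N) :
    ‖psiU ε G i η‖ ≤ ∑ j : Fin N, ‖G j η‖ := by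
  refine (norm_sum_le _ _).trans (Finset.sum_le_sum fun j _ => ?_)
  rw [norm_mul, norm_mul]
  calc _ ≤ 1 * 1 * ‖G j η‖ := by
        gcongr
        · exact mm_norm _ _ _
        · exact hg_norm _ _
    _ = _ := by ring

lemma phiU_int {N : ℕ} (hN : 2 ≤ N) (ε : ℝ) (G : Fin N → 𝓢(EN N, ℂ)) (n : ℕ) :
    Integrable (fun η => ‖η‖ ^ n * ‖phiU ε G η‖) := by
  have hm : AEStronglyMeasurable (fun η => ‖η‖ ^ n * ‖phiU ε G η‖) volume :=
    ((measurable_norm.pow_const n).mul (phiU_meas ε G).norm).aestronglyMeasurable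
  have hb : Integrable (fun η : EN N => ∑ j : Fin N, ‖η‖ ^ n * (‖η‖⁻¹ * ‖G j η‖)) := by
    refine integrable_finsetSum _ fun j _ => ?_
    rcases n with _ | k
    · simpa using inv_sch_int hN (G j)
    · rcases k with _ | k
      · refine (G j).integrable.norm.mono' ?_ (Filter.Eventually.of_forall fun η => ?_)
        · exact ((measurable_norm.pow_const _).mul (measurable_norm.inv.mul (G j).continuous.norm.measurable)).aestronglyMeasurable
        · rw [Real.norm_of_nonneg (by positivity), ← mul_assoc]
          refine mul_le_of_le_one_left (norm_nonneg _) ?_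
          simpa using mul_inv_le_one
      · refine ((G j).integrable_pow_mul volume (k + 1)).congr (Filter.Eventually.of_forall fun η => ?_)
        simp only
        rcases eq_or_ne η 0 with h | h
        · simp [h]
        · have := norm_pos_iff.2 h
          field_simp
          ring
  refine hb.mono' hm (Filter.Eventually.of_forall fun η => ?_)
  rw [Real.norm_of_nonneg (by positivity), ← Finset.mul_sum]
  exact mul_le_mul_of_nonneg_left (phiU_norm ε G η) (by positivity)

lemma psiU_int {N : ℕ} (ε : ℝ) (G : Fin N → 𝓢(EN N, ℂ)) (i : Fin N) (n : ℕ) :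
    Integrable (fun η => ‖η‖ ^ n * ‖psiU ε G i η‖) := by
  have hm : AEStronglyMeasurable (fun η => ‖η‖ ^ n * ‖psiU ε G i η‖) volume :=
    ((measurable_norm.pow_const n).mul (psiU_meas ε G i).norm).aestronglyMeasurable
  have hb : Integrable (fun η : EN N => ∑ j : Fin N, ‖η‖ ^ n * (‖G j η‖)) :=
    integrable_finsetSum _ fun j _ => (G j).integrable_pow_mul volume n
  refine hb.mono' hm (Filter.Eventually.of_forall fun η => ?_)
  rw [Real.norm_of_nonneg (by positivity), ← Finset.mul_sum]
  exact mul_le_mul_of_nonneg_left (psiU_norm ε G i η) (by positivity)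

lemma phiU_int0 {N : ℕ} (hN : 2 ≤ N) (ε : ℝ) (G : Fin N → 𝓢(EN N, ℂ)) : Integrable (phiU ε G) := by
  have := phiU_int hN ε G 0
  simp only [pow_zero, one_mul] at this
  exact (integrable_norm_iff (phiU_meas ε G).aestronglyMeasurable).1 this

lemma psiU_int0 {N : ℕ} (ε : ℝ) (G : Fin N → 𝓢(EN N, ℂ)) (i : Fin N) : Integrable (psiU ε G i) := by
  have := psiU_int ε G i 0
  simp only [pow_zero, one_mul] at this
  exact (integrable_norm_iff (psiU_meas ε G i).aestronglyMeasurable).1 this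

lemma phi_psi {N : ℕ} (ε : ℝ) (G : Fin N → 𝓢(EN N, ℂ)) (i : Fin N) (η : EN N) :
    (2 * π * Complex.I) * (⟪η, EuclideanSpace.single i (1:ℝ)⟫ : ℂ) * phiU ε G η = psiU ε G i η := by
  unfold phiU psiU
  rw [Finset.mul_sum]
  refine Finset.sum_congr rfl fun j _ => ?_
  rw [EuclideanSpace.inner_single_right]
  unfold mm
  have hp : (π : ℂ) ≠ 0 := by exact_mod_cast pi_ne_zero
  push_cast
  simp only [conj_trivial, one_mul]
  field_simp
  rw [Complex.I_sq]
  ring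

lemma fderiv_U {N : ℕ} (hN : 2 ≤ N) (ε : ℝ) (G : Fin N → 𝓢(EN N, ℂ)) (i : Fin N) (x : EN N) :
    fderiv ℝ (𝓕⁻ (phiU ε G)) x (EuclideanSpace.single i (1:ℝ)) = 𝓕⁻ (psiU ε G i) x := by
  have h := (finv_hasF (phiU ε G) (phiU_int0 hN ε G) (by simpa using phiU_int hN ε G 1) x).2
    (EuclideanSpace.single i (1:ℝ))
  rw [h]
  exact congrArg (fun f : EN N → ℂ => 𝓕⁻ f x) (funext fun η => phi_psi ε G i η)

noncomputable def chiU {N : ℕ} (ε : ℝ) (D : 𝓢(EN N, ℂ)) (i k : Fin N) (η : EN N) : ℂ :=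
  mm i k η * hg ε η * D η

lemma psi_chi {N : ℕ} (ε : ℝ) (G : Fin N → 𝓢(EN N, ℂ)) (D : 𝓢(EN N, ℂ))
    (hD : ∀ η, D η = ∑ j : Fin N, (2 * π * Complex.I) * (η j : ℂ) * G j η) (i k : Fin N) (η : EN N) :
    (2 * π * Complex.I) * (⟪η, EuclideanSpace.single k (1:ℝ)⟫ : ℂ) * psiU ε G i η = chiU ε D i k η := by
  unfold psiU chiU
  rw [hD, Finset.mul_sum, Finset.mul_sum]
  refine Finset.sum_congr rfl fun j _ => ?_
  rw [EuclideanSpace.inner_single_right]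
  unfold mm
  push_cast
  simp only [conj_trivial, one_mul]
  ring

lemma fderiv2_U {N : ℕ} (hN : 2 ≤ N) (ε : ℝ) (G : Fin N → 𝓢(EN N, ℂ)) (D : 𝓢(EN N, ℂ))
    (hD : ∀ η, D η = ∑ j : Fin N, (2 * π * Complex.I) * (η j : ℂ) * G j η) (i k : Fin N) (x : EN N) :
    fderiv ℝ (fderiv ℝ (𝓕⁻ (phiU ε G))) x (EuclideanSpace.single k (1:ℝ)) (EuclideanSpace.single i (1:ℝ))
      = 𝓕⁻ (chiU ε D i k) x := by
  have hs : ContDiff ℝ (⊤ : ℕ∞) (𝓕⁻ (phiU ε G)) := finv_smooth _ (phiU_int hN ε G)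
  have hd : DifferentiableAt ℝ (fderiv ℝ (𝓕⁻ (phiU ε G))) x :=
    ((hs.fderiv_right (m := 1) (by norm_cast)).differentiable (by norm_num)) x
  have e : fderiv ℝ (fun y => fderiv ℝ (𝓕⁻ (phiU ε G)) y (EuclideanSpace.single i (1:ℝ))) x
      (EuclideanSpace.single k (1:ℝ)) = fderiv ℝ (fderiv ℝ (𝓕⁻ (phiU ε G))) x
        (EuclideanSpace.single k (1:ℝ)) (EuclideanSpace.single i (1:ℝ)) := by
    rw [fderiv_clm_apply hd (differentiableAt_const _)]
    simp
  rw [← e]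
  have e2 : (fun y => fderiv ℝ (𝓕⁻ (phiU ε G)) y (EuclideanSpace.single i (1:ℝ))) = 𝓕⁻ (psiU ε G i) :=
    funext fun y => fderiv_U hN ε G i y
  rw [e2, (finv_hasF (psiU ε G i) (psiU_int0 ε G i) (by simpa using psiU_int ε G i 1) x).2]
  exact congrArg (fun f : EN N → ℂ => 𝓕⁻ f x) (funext fun η => psi_chi ε G D hD i k η)


lemma LqNorm_le_sum {N : ℕ} {q : ℝ} (hq : 1 < q) {E : Type*} [NormedAddCommGroup E]
    {ι : Type*} [Fintype ι] (V : EN N → E) (hV : Continuous V) (w : ι → EN N → ℂ)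
    (hw : ∀ i, Continuous (w i)) (h1 : ∀ i x, ‖w i x‖ ≤ ‖V x‖) (h2 : ∀ x, ‖V x‖ ≤ ∑ i, ‖w i x‖)
    (K : ι → ℝ) (hK : ∀ i, 0 ≤ K i)
    (h : ∀ i, Integrable (fun x => ‖w i x‖ ^ q) → LqNorm volume q (w i) ≤ K i) :
    LqNorm volume q V ≤ ∑ i, K i := by
  have hq0 : 0 < q := by linarith
  by_cases hi : Integrable (fun x => ‖V x‖ ^ q)
  swap
  · have : LqNorm volume q V = 0 := by
      unfold LqNorm
      rw [integral_undef hi, Real.zero_rpow (by positivity)]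
    rw [this]
    exact Finset.sum_nonneg fun i _ => hK i
  have hVm := memLp_of_rpow hq0 hV.aestronglyMeasurable hi
  have hwm : ∀ i, MemLp (w i) (ENNReal.ofReal q) volume := fun i =>
    hVm.mono (hw i).aestronglyMeasurable (Filter.Eventually.of_forall (h1 i))
  have hwi : ∀ i, Integrable (fun x => ‖w i x‖ ^ q) := fun i => by
    have := (hwm i).integrable_norm_rpow (by simpa using hq0) ENNReal.ofReal_ne_top
    rwa [ENNReal.toReal_ofReal hq0.le] at this
  have hq1 : 1 ≤ ENNReal.ofReal q := by
    rw [← ENNReal.ofReal_one]; exact ENNReal.ofReal_le_ofReal hq.le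
  calc LqNorm volume q V = (eLpNorm V (ENNReal.ofReal q) volume).toReal := LqNorm_eq hq0 hVm
    _ ≤ (∑ i, eLpNorm (w i) (ENNReal.ofReal q) volume).toReal := by
        refine ENNReal.toReal_mono (ENNReal.sum_ne_top.2 fun i _ => (hwm i).2.ne) ?_
        calc eLpNorm V (ENNReal.ofReal q) volume
            ≤ eLpNorm (∑ i, fun x => ‖w i x‖) (ENNReal.ofReal q) volume := by
              refine eLpNorm_mono fun x => ?_
              rw [Finset.sum_apply, Real.norm_of_nonneg (Finset.sum_nonneg fun i _ => norm_nonneg _)]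
              exact h2 x
          _ ≤ ∑ i, eLpNorm (fun x => ‖w i x‖) (ENNReal.ofReal q) volume :=
              eLpNorm_sum_le (fun i _ => (hw i).norm.aestronglyMeasurable) hq1
          _ = _ := by simp only [eLpNorm_norm]
    _ = ∑ i, LqNorm volume q (w i) := by
        rw [ENNReal.toReal_sum fun i _ => (hwm i).2.ne]
        exact Finset.sum_congr rfl fun i _ => (LqNorm_eq hq0 (hwm i)).symm
    _ ≤ _ := Finset.sum_le_sum fun i _ => h i (hwi i)

lemma finv_cont {N : ℕ} (φ : EN N → ℂ) (hφ : Integrable φ) : Continuous (𝓕⁻ φ) := by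
  have e : 𝓕⁻ φ = VectorFourier.fourierIntegral 𝐞 volume (-innerSL ℝ : EN N →L[ℝ] EN N →L[ℝ] ℝ).toLinearMap₁₂ φ :=
    funext (finv_eq φ)
  rw [e]
  exact VectorFourier.fourierIntegral_continuous Real.continuous_fourierChar
    (by simp only [ContinuousLinearMap.toLinearMap₁₂_apply]; simp; fun_prop) hφ

lemma chiU_int {N : ℕ} (ε : ℝ) (D : 𝓢(EN N, ℂ)) (i k : Fin N) : Integrable (chiU ε D i k) := by
  refine D.integrable.norm.mono' (((mm_meas i k).mul (hg_cont1 (N := N) ε).measurable).mul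
    D.continuous.measurable).aestronglyMeasurable (Filter.Eventually.of_forall fun η => ?_)
  unfold chiU
  rw [norm_mul, norm_mul]
  calc _ ≤ 1 * 1 * ‖D η‖ := by
        gcongr
        · exact mm_norm _ _ _
        · exact hg_norm _ _
    _ = _ := by ring

lemma chi_est {N : ℕ} {q C : ℝ} (hq : 1 < q) (hC : 0 < C)
    (hb : ∀ (f g : 𝓢(EN N, ℂ)) (i j : Fin N) (ε : ℝ), 0 < ε →
      ‖∫ η, mm i j η * hg ε η * (𝓕 f η * 𝓕⁻ g η)‖ ≤
        C * (LqNorm volume q f * LqNorm volume (q / (q - 1)) g))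
    (ε : ℝ) (hε : 0 < ε) (d : 𝓢(EN N, ℂ)) (i k : Fin N)
    (hi : Integrable (fun x => ‖𝓕⁻ (chiU ε (𝓕 d) i k) x‖ ^ q)) :
    LqNorm volume q (𝓕⁻ (chiU ε (𝓕 d) i k)) ≤ C * LqNorm volume q d := by
  refine dual_main hq (finv_cont _ (chiU_int ε _ i k)) hi
    (mul_nonneg hC.le (LqNorm_nonneg _ _)) fun g => ?_
  rw [finv_pair _ (chiU_int ε _ i k)]
  refine le_trans (le_of_eq ?_) ((hb d g i k ε hε).trans_eq (by ring))
  congr 2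
  funext η
  unfold chiU
  ring

lemma psi_est {N : ℕ} {q C : ℝ} (hq : 1 < q) (hC : 0 < C)
    (hb : ∀ (f g : 𝓢(EN N, ℂ)) (i j : Fin N) (ε : ℝ), 0 < ε →
      ‖∫ η, mm i j η * hg ε η * (𝓕 f η * 𝓕⁻ g η)‖ ≤
        C * (LqNorm volume q f * LqNorm volume (q / (q - 1)) g))
    (ε : ℝ) (hε : 0 < ε) (f : Fin N → 𝓢(EN N, ℂ)) (i : Fin N)
    (hi : Integrable (fun x => ‖𝓕⁻ (psiU ε (fun j => 𝓕 (f j)) i) x‖ ^ q)) :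
    LqNorm volume q (𝓕⁻ (psiU ε (fun j => 𝓕 (f j)) i)) ≤ ∑ j : Fin N, C * LqNorm volume q (f j) := by
  refine dual_main hq (finv_cont _ (psiU_int0 ε _ i)) hi
    (Finset.sum_nonneg fun j _ => mul_nonneg hC.le (LqNorm_nonneg _ _)) fun g => ?_
  rw [finv_pair _ (psiU_int0 ε _ i)]
  have hP : ∀ j : Fin N, Integrable (fun η => mm i j η * hg ε η * (𝓕 (f j) η * 𝓕⁻ g η)) := fun j => by
    have h0 := PP_int (f j) g 0
    simp only [pow_zero, one_mul] at h0
    refine h0.mono' (((mm_meas i j).mul (hg_cont1 (N := N) ε).measurable).mul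
      ((𝓕 (f j)).continuous.mul (𝓕⁻ g).continuous).measurable).aestronglyMeasurable
      (Filter.Eventually.of_forall fun η => ?_)
    rw [norm_mul, norm_mul]
    calc _ ≤ 1 * 1 * ‖𝓕 (f j) η * 𝓕⁻ g η‖ := by
          gcongr
          · exact mm_norm _ _ _
          · exact hg_norm _ _
      _ = _ := by ring
  have : ∫ η, psiU ε (fun j => 𝓕 (f j)) i η * 𝓕⁻ g η
      = ∑ j : Fin N, ∫ η, mm i j η * hg ε η * (𝓕 (f j) η * 𝓕⁻ g η) := by
    rw [← integral_finsetSum _ fun j _ => hP j]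
    congr 1
    funext η
    unfold psiU
    rw [Finset.sum_mul]
    exact Finset.sum_congr rfl fun j _ => by ring
  rw [this, Finset.sum_mul]
  refine (norm_sum_le _ _).trans (Finset.sum_le_sum fun j _ => ?_)
  exact (hb (f j) g i j ε hε).trans_eq (by ring)

lemma clm_norm_le {N : ℕ} {E : Type*} [NormedAddCommGroup E] [NormedSpace ℝ E] (L : EN N →L[ℝ] E) :
    ‖L‖ ≤ ∑ i : Fin N, ‖L (EuclideanSpace.single i (1:ℝ))‖ := by
  refine L.opNorm_le_bound (Finset.sum_nonneg fun i _ => norm_nonneg _) fun v => ?_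
  have hv : v = ∑ i : Fin N, v i • EuclideanSpace.single i (1:ℝ) := by
    ext k
    simp [Finset.sum_apply, Pi.single_apply]
  conv_lhs => rw [hv]
  rw [map_sum, Finset.sum_mul]
  refine (norm_sum_le _ _).trans (Finset.sum_le_sum fun i _ => ?_)
  rw [map_smul, norm_smul, mul_comm]
  exact mul_le_mul_of_nonneg_left (PiLp.norm_apply_le v i) (norm_nonneg _)

lemma it2_eq {N : ℕ} (U : EN N → ℂ) (x : EN N) :
    ‖iteratedFDeriv ℝ 2 U x‖ = ‖fderiv ℝ (fderiv ℝ U) x‖ := by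
  have h := norm_iteratedFDeriv_fderiv (𝕜 := ℝ) (f := U) (n := 1) (x := x)
  rw [← h]
  exact norm_iteratedFDeriv_one _

lemma Lq_mono {N : ℕ} {q : ℝ} (hq : 1 < q) (f : 𝓢(EN N, ℂ))
    (F : 𝓢(EN N, EuclideanSpace ℂ (Fin N))) (h : ∀ x, ‖f x‖ ≤ ‖F x‖) :
    LqNorm volume q f ≤ LqNorm volume q F := by
  have h1 := f.memLp (ENNReal.ofReal q) volume
  have h2 := F.memLp (ENNReal.ofReal q) volume
  rw [LqNorm_eq (by linarith) h1, LqNorm_eq (by linarith) h2]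
  exact ENNReal.toReal_mono h2.2.ne (eLpNorm_mono h)


noncomputable def cpt {N : ℕ} (F : 𝓢(EN N, EuclideanSpace ℂ (Fin N))) (j : Fin N) : 𝓢(EN N, ℂ) :=
  SchwartzMap.postcompCLM (EuclideanSpace.proj j : EuclideanSpace ℂ (Fin N) →L[ℂ] ℂ) F

lemma cpt_apply {N : ℕ} (F : 𝓢(EN N, EuclideanSpace ℂ (Fin N))) (j : Fin N) (x : EN N) :
    cpt F j x = F x j := rfl

lemma cpt_four {N : ℕ} (F : 𝓢(EN N, EuclideanSpace ℂ (Fin N))) (j : Fin N) (η : EN N) :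
    (∫ y : EuclideanSpace ℝ (Fin N),
      Complex.exp (-Complex.I * (⟪y, (2 * π) • η⟫ : ℂ)) • F y) j = 𝓕 (cpt F j) η := by
  have hint : Integrable (fun y : EN N => Complex.exp (-Complex.I * (⟪y, (2 * π) • η⟫ : ℂ)) • F y) := by
    refine F.integrable.norm.mono' ?_ (Filter.Eventually.of_forall fun y => ?_)
    · refine Continuous.aestronglyMeasurable ?_
      have := F.continuous
      fun_prop
    · rw [norm_smul, mul_comm, neg_mul, ← mul_neg, ← Complex.ofReal_neg,
        mul_comm Complex.I, Complex.norm_exp_ofReal_mul_I, mul_one]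
  have h := (EuclideanSpace.proj j : EuclideanSpace ℂ (Fin N) →L[ℂ] ℂ).integral_comp_comm hint
  refine Eq.trans h.symm ?_
  rw [SchwartzMap.fourier_coe, Real.fourier_eq']
  refine integral_congr_ae (Filter.Eventually.of_forall fun y => ?_)
  simp only [map_smul, smul_eq_mul]
  rw [cpt_apply, inner_smul_right]
  congr 2
  push_cast
  ring

noncomputable def TT {N : ℕ} (ε : ℝ) (F : 𝓢(EN N, EuclideanSpace ℂ (Fin N))) (x ξ : EN N) : ℂ :=
  Complex.exp (Complex.I * (⟪x, ξ⟫ : ℂ)) * Complex.exp (-(ε : ℂ) * (‖ξ‖ : ℂ) ^ 2) *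
              (Complex.I * ∑ j : Fin N, (ξ j : ℂ) *
                (∫ y : EuclideanSpace ℝ (Fin N),
                  Complex.exp (-Complex.I * (⟪y, ξ⟫ : ℂ)) • F y) j) /
              (‖ξ‖ : ℂ) ^ 2

lemma TT_eq {N : ℕ} {ε : ℝ} (hε : 0 < ε) (F : 𝓢(EN N, EuclideanSpace ℂ (Fin N))) (x η : EN N) :
    TT ε F x ((2 * π) • η) = -(𝐞 ⟪η, x⟫ • phiU ε (fun j => 𝓕 (cpt F j)) η) := by
  unfold TT phiU
  simp only [cpt_four]
  rw [Circle.smul_def, Real.fourierChar_apply, smul_eq_mul, Finset.mul_sum, Finset.mul_sum, Finset.mul_sum,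
    Finset.sum_div, ← Finset.sum_neg_distrib]
  refine Finset.sum_congr rfl fun j _ => ?_
  have hn : ‖(2 * π) • η‖ = 2 * π * ‖η‖ := by
    rw [norm_smul, Real.norm_of_nonneg (by positivity)]
  have hh : Complex.exp (-(ε : ℂ) * (‖(2 * π) • η‖ : ℂ) ^ 2) = hg ε η := by
    unfold hg
    rw [hn, max_eq_left hε.le, Complex.ofReal_exp]
    congr 1
    push_cast
    ring
  have he : Complex.exp (Complex.I * (⟪x, (2 * π) • η⟫ : ℂ)) = Complex.exp (((2 * π * ⟪η, x⟫ : ℝ) : ℂ) * Complex.I) := by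
    rw [inner_smul_right, real_inner_comm, mul_comm]
  rw [hh, he, hn]
  have hp : (π : ℂ) ≠ 0 := by exact_mod_cast pi_ne_zero
  simp only [PiLp.smul_apply, smul_eq_mul]
  push_cast
  rcases eq_or_ne η 0 with h | h
  · simp [h]
  · have : (‖η‖ : ℂ) ≠ 0 := by exact_mod_cast (norm_pos_iff.2 h).ne'
    field_simp

lemma TT_int {N : ℕ} (hN : 2 ≤ N) {ε : ℝ} (hε : 0 < ε) (F : 𝓢(EN N, EuclideanSpace ℂ (Fin N))) (x : EN N) :
    Integrable (TT ε F x) := by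
  have hp : (2 * π : ℝ) ≠ 0 := by positivity
  rw [← integrable_comp_smul_iff volume (TT ε F x) hp]
  simp only [TT_eq hε]
  refine Integrable.neg ?_
  have h0 := phiU_int0 hN ε (fun j => 𝓕 (cpt F j))
  refine h0.norm.mono' ?_ (Filter.Eventually.of_forall fun η => ?_)
  · refine AEStronglyMeasurable.smul ?_ h0.1
    exact (continuous_subtype_val.comp <| Real.continuous_fourierChar.comp (by fun_prop : Continuous fun η : EN N => ⟪η, x⟫)).aestronglyMeasurable
  · rw [Circle.norm_smul]

lemma TT_integral {N : ℕ} {ε : ℝ} (hε : 0 < ε) (F : 𝓢(EN N, EuclideanSpace ℂ (Fin N))) (x : EN N) :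
    𝓕⁻ (phiU ε (fun j => 𝓕 (cpt F j))) x = -((((2 * π) ^ N : ℝ) : ℂ)⁻¹ * ∫ ξ, TT ε F x ξ) := by
  have h := Measure.integral_comp_smul volume (TT ε F x) (2 * π)
  simp only [TT_eq hε] at h
  rw [integral_neg, finrank_euclideanSpace, Fintype.card_fin, abs_of_pos (by positivity), Complex.real_smul] at h
  rw [Real.fourierInv_eq, ← neg_eq_iff_eq_neg, h]
  push_cast
  rfl

noncomputable def dvg {N : ℕ} (F : 𝓢(EN N, EuclideanSpace ℂ (Fin N))) : 𝓢(EN N, ℂ) :=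
  ∑ j : Fin N, ∂_{(EuclideanSpace.single j (1:ℝ) : EN N)} (cpt F j)

lemma sch_sum_apply {N : ℕ} {ι : Type*} (s : Finset ι) (f : ι → 𝓢(EN N, ℂ)) (x : EN N) :
    (∑ j ∈ s, f j) x = ∑ j ∈ s, f j x := by
  classical
  induction s using Finset.induction_on with
  | empty => simp
  | insert a s ha ih => rw [Finset.sum_insert ha, Finset.sum_insert ha, ← ih]; rfl

lemma dvg_apply {N : ℕ} (F : 𝓢(EN N, EuclideanSpace ℂ (Fin N))) (x : EN N) :
    dvg F x = ∑ j : Fin N, fderiv ℝ (fun y => F y j) x (EuclideanSpace.single j 1) := by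
  unfold dvg
  rw [sch_sum_apply]
  refine Finset.sum_congr rfl fun j _ => ?_
  rw [SchwartzMap.lineDerivOp_apply_eq_fderiv]
  rfl

lemma dvg_four {N : ℕ} (F : 𝓢(EN N, EuclideanSpace ℂ (Fin N))) (η : EN N) :
    𝓕 (dvg F) η = ∑ j : Fin N, (2 * π * Complex.I) * (η j : ℂ) * 𝓕 (cpt F j) η := by
  have : 𝓕 (dvg F) = ∑ j : Fin N, 𝓕 (∂_{(EuclideanSpace.single j (1:ℝ) : EN N)} (cpt F j)) := by
    unfold dvg
    exact map_sum (FourierTransform.fourierCLE ℂ 𝓢(EN N, ℂ)) _ _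
  rw [this, sch_sum_apply]
  refine Finset.sum_congr rfl fun j _ => ?_
  rw [four_ld, EuclideanSpace.inner_single_right]
  simp


end Helpers

open scoped SchwartzMap FourierTransform LineDeriv ContDiff in
/-- The Riesz-transform-type estimates, uniform in the regularization parameter `ε`,
from the proof of Lemma 3.2: the Gaussian-regularized solution `U^ε` of `ΔU = div F`
satisfies `‖∇U^ε‖_q ≤ C‖F‖_q` and `‖D²U^ε‖_q ≤ C‖div F‖_q`. -/
theorem stmt_10 (N : ℕ) (hN : 2 ≤ N) (q : ℝ) (hq : 1 < q) :
    ∃ C : ℝ, 0 < C ∧ ∀ ε : ℝ, 0 < ε →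
      ∀ F : SchwartzMap (EuclideanSpace ℝ (Fin N)) (EuclideanSpace ℂ (Fin N)),
        (∀ x : EuclideanSpace ℝ (Fin N),
          IntegrableOn (fun ξ : EuclideanSpace ℝ (Fin N) =>
            Complex.exp (Complex.I * (⟪x, ξ⟫ : ℂ)) * Complex.exp (-(ε : ℂ) * (‖ξ‖ : ℂ) ^ 2) *
              (Complex.I * ∑ j : Fin N, (ξ j : ℂ) *
                (∫ y : EuclideanSpace ℝ (Fin N),
                  Complex.exp (-Complex.I * (⟪y, ξ⟫ : ℂ)) • F y) j) /
              (‖ξ‖ : ℂ) ^ 2) {(0 : EuclideanSpace ℝ (Fin N))}ᶜ volume) ∧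
        ∃ U : EuclideanSpace ℝ (Fin N) → ℂ,
          (∀ x, U x = -((((2 * π) ^ N : ℝ) : ℂ)⁻¹ *
              ∫ ξ in {(0 : EuclideanSpace ℝ (Fin N))}ᶜ,
                Complex.exp (Complex.I * (⟪x, ξ⟫ : ℂ)) *
                  Complex.exp (-(ε : ℂ) * (‖ξ‖ : ℂ) ^ 2) *
                  (Complex.I * ∑ j : Fin N, (ξ j : ℂ) *
                    (∫ y : EuclideanSpace ℝ (Fin N),
                      Complex.exp (-Complex.I * (⟪y, ξ⟫ : ℂ)) • F y) j) /
                  (‖ξ‖ : ℂ) ^ 2)) ∧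
          ContDiff ℝ (⊤ : ℕ∞) U ∧
          LqNorm volume q (fun x => fderiv ℝ U x) ≤ C * LqNorm volume q (fun x => F x) ∧
          LqNorm volume q (fun x => iteratedFDeriv ℝ 2 U x) ≤
            C * LqNorm volume q (fun x =>
              ∑ j : Fin N, fderiv ℝ (fun y => F y j) x (EuclideanSpace.single j 1)) := by
  obtain ⟨C, hC, hb⟩ := bil4 q hq
  have hN0 : (0:ℝ) < N := by exact_mod_cast (by omega : 0 < N)
  refine ⟨N * (N * C), by positivity, fun ε hε F => ?_⟩
  have hnon : Nontrivial (EN N) := by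
    have : Nonempty (Fin N) := ⟨⟨0, by omega⟩⟩
    unfold EN; infer_instance
  set G : Fin N → 𝓢(EN N, ℂ) := fun j => 𝓕 (cpt F j) with hG
  have hs : ContDiff ℝ (⊤ : ℕ∞) (𝓕⁻ (phiU ε G)) := finv_smooth _ (phiU_int hN ε G)
  have hs1 : ContDiff ℝ 1 (fderiv ℝ (𝓕⁻ (phiU ε G))) := hs.fderiv_right (m := 1) (by norm_cast)
  refine ⟨fun x => (TT_int hN hε F x).integrableOn, 𝓕⁻ (phiU ε G), fun x => ?_, hs, ?_, ?_⟩
  · rw [restrict_compl_singleton]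
    exact TT_integral hε F x
  · refine (LqNorm_le_sum hq _ hs1.continuous (fun i => 𝓕⁻ (psiU ε G i))
      (fun i => finv_cont _ (psiU_int0 ε G i)) (fun i x => ?_) (fun x => ?_)
      (fun _ => ∑ j : Fin N, C * LqNorm volume q (cpt F j))
      (fun i => Finset.sum_nonneg fun j _ => mul_nonneg hC.le (LqNorm_nonneg _ _))
      (fun i hi => psi_est hq hC (hb N) ε hε (cpt F) i hi)).trans ?_
    · rw [← fderiv_U hN]
      refine (ContinuousLinearMap.le_opNorm _ _).trans_eq ?_
      simp
    · refine (clm_norm_le _).trans_eq (Finset.sum_congr rfl fun i _ => ?_)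
      rw [fderiv_U hN]
    · have : ∀ j : Fin N, C * LqNorm volume q (cpt F j) ≤ C * LqNorm volume q F := fun j =>
        mul_le_mul_of_nonneg_left (Lq_mono hq _ _ fun x => PiLp.norm_apply_le (F x) j) hC.le
      calc _ ≤ ∑ i : Fin N, ∑ j : Fin N, C * LqNorm volume q F :=
            Finset.sum_le_sum fun i _ => Finset.sum_le_sum fun j _ => this j
        _ = _ := by
            simp only [Finset.sum_const, Finset.card_univ, Fintype.card_fin, nsmul_eq_mul]
            ring
  · have e1 : LqNorm volume q (fun x => iteratedFDeriv ℝ 2 (𝓕⁻ (phiU ε G)) x)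
        = LqNorm volume q (fderiv ℝ (fderiv ℝ (𝓕⁻ (phiU ε G)))) := by
      unfold LqNorm
      simp only [it2_eq]
    have e2 : (fun x => ∑ j : Fin N, fderiv ℝ (fun y => F y j) x (EuclideanSpace.single j 1)) = dvg F :=
      funext fun x => (dvg_apply F x).symm
    rw [e1, e2]
    have hD := dvg_four F
    refine (LqNorm_le_sum hq _ (hs1.continuous_fderiv (by norm_num))
      (fun p : Fin N × Fin N => 𝓕⁻ (chiU ε (𝓕 (dvg F)) p.1 p.2))
      (fun p => finv_cont _ (chiU_int ε _ p.1 p.2)) (fun p x => ?_) (fun x => ?_)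
      (fun _ => C * LqNorm volume q (dvg F))
      (fun _ => mul_nonneg hC.le (LqNorm_nonneg _ _))
      (fun p hi => chi_est hq hC (hb N) ε hε (dvg F) p.1 p.2 hi)).trans ?_
    · rw [← fderiv2_U hN ε G _ hD]
      refine (ContinuousLinearMap.le_opNorm _ _).trans ?_
      refine (mul_le_mul_of_nonneg_right (ContinuousLinearMap.le_opNorm _ _) (norm_nonneg _)).trans_eq ?_
      simp
    · rw [Fintype.sum_prod_type_right]
      refine (clm_norm_le _).trans (Finset.sum_le_sum fun k _ => ?_)
      refine (clm_norm_le _).trans_eq (Finset.sum_congr rfl fun i _ => ?_)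
      rw [fderiv2_U hN ε G _ hD]
    · simp only [Finset.sum_const, Finset.card_univ, Fintype.card_prod, Fintype.card_fin, nsmul_eq_mul]
      push_cast
      exact le_of_eq (by ring)
end

section
/- Let σ ∈ (0, π/2), λ ∈ ℂ with λ ≠ 0 and |arg λ| < π − σ, let ρ₊ > 0, ρ₋ > 0, b ≥ 0, and set A_± = √(ρ_± λ + b²) (principal square roots) and D = ρ₊A₋ + ρ₋A₊. Then D ≠ 0, and for any g₁, g₂ ∈ ℂ the functions w_± : ℝ → ℂ defined by w₊(t) = ((A₋/D) g₁ − (ρ₋/D) g₂) e^{−A₊ t} and w₋(t) = ((−A₊/D) g₁ − (ρ₊/D) g₂) e^{A₋ t} satisfy: (i) ρ₊ λ w₊(t) − w₊''(t) + b² w₊(t) = 0 and ρ₋ λ w₋(t) − w₋''(t) + b² w₋(t) = 0 for all t ∈ ℝ; (ii) the jump conditions ρ₊ w₊(0) − ρ₋ w₋(0) = g₁ and w₊'(0) − w₋'(0) = g₂; (iii) w₊(t) → 0 as t → +∞ and w₋(t) → 0 as t → −∞. -/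
open Real

lemma aux_re (z : ℂ) (hz : z ∈ Complex.slitPlane) : 0 < (z ^ ((1 : ℂ) / 2)).re := by
  have h0 : z ≠ 0 := Complex.slitPlane_ne_zero hz
  have h1 : z.arg ≠ π := (Complex.mem_slitPlane_iff_arg.1 hz).1
  have h2 : z.arg < π := lt_of_le_of_ne (Complex.arg_le_pi z) h1
  have h3 := Complex.neg_pi_lt_arg z
  have e : Complex.log z * ((1 : ℂ) / 2) = Complex.log z * (((1 / 2 : ℝ)) : ℂ) := by
    push_cast; rfl
  rw [Complex.cpow_def_of_ne_zero h0, e, Complex.exp_re, Complex.im_mul_ofReal, Complex.log_im]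
  apply mul_pos (Real.exp_pos _)
  apply Real.cos_pos_of_mem_Ioo
  constructor <;> linarith

lemma aux_slit (lam : ℂ) (h : lam ∈ Complex.slitPlane) (r b : ℝ) (hr : 0 < r) :
    (r : ℂ) * lam + (b : ℂ) ^ 2 ∈ Complex.slitPlane := by
  rw [Complex.mem_slitPlane_iff] at h ⊢
  have e1 : ((r : ℂ) * lam + (b : ℂ) ^ 2).re = r * lam.re + b ^ 2 := by
    rw [← Complex.ofReal_pow, Complex.add_re, Complex.re_ofReal_mul, Complex.ofReal_re]
  have e2 : ((r : ℂ) * lam + (b : ℂ) ^ 2).im = r * lam.im := by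
    rw [← Complex.ofReal_pow, Complex.add_im, Complex.im_ofReal_mul, Complex.ofReal_im, add_zero]
  rw [e1, e2]
  rcases h with h | h
  · left; positivity
  · right; exact mul_ne_zero hr.ne' h

lemma aux_sq (z : ℂ) : (z ^ ((1 : ℂ) / 2)) ^ 2 = z := by
  rw [one_div]
  exact Complex.cpow_nat_inv_pow z two_ne_zero

lemma aux_deriv (c a : ℂ) : deriv (fun t : ℝ => c * Complex.exp (a * (t : ℂ)))
    = fun t : ℝ => (c * a) * Complex.exp (a * (t : ℂ)) := by
  funext t
  have h1 : HasDerivAt (fun t : ℝ => a * (t : ℂ)) (a * 1) t :=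
    (Complex.ofRealCLM.hasDerivAt (x := t)).const_mul a
  have h2 := (h1.cexp).const_mul c
  rw [h2.deriv]; ring

lemma aux_lim (c a : ℂ) (l : Filter ℝ) (h : Filter.Tendsto (fun t : ℝ => a.re * t) l Filter.atBot) :
    Filter.Tendsto (fun t : ℝ => c * Complex.exp (a * (t : ℂ))) l (nhds 0) := by
  have : Filter.Tendsto (fun t : ℝ => Complex.exp (a * (t : ℂ))) l (nhds 0) := by
    rw [Complex.tendsto_exp_nhds_zero_iff]
    simpa using h
  simpa using this.const_mul c

/-- The explicit solution formula for the Fourier-transformed two-phase interface system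
(3.8): with `A_± = √(ρ_±λ + b²)` and `D = ρ₊A₋ + ρ₋A₊ ≠ 0`, the functions
`w₊(t) = ((A₋/D)g₁ − (ρ₋/D)g₂) e^{−A₊t}` and `w₋(t) = ((−A₊/D)g₁ − (ρ₊/D)g₂) e^{A₋t}`
solve the ODEs with jump conditions and decay at `±∞`. -/
theorem stmt_12 (σ : ℝ) (hσ : σ ∈ Set.Ioo 0 (π / 2)) (lam : ℂ) (hlam0 : lam ≠ 0)
    (hlam : |lam.arg| < π - σ) (ρp ρm : ℝ) (hρp : 0 < ρp) (hρm : 0 < ρm)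
    (b : ℝ) (hb : 0 ≤ b) (Ap Am D : ℂ)
    (hAp : Ap = ((ρp : ℂ) * lam + (b : ℂ) ^ 2) ^ ((1 : ℂ) / 2))
    (hAm : Am = ((ρm : ℂ) * lam + (b : ℂ) ^ 2) ^ ((1 : ℂ) / 2))
    (hD : D = (ρp : ℂ) * Am + (ρm : ℂ) * Ap)
    (g₁ g₂ : ℂ) (wp wm : ℝ → ℂ)
    (hwp : wp = fun t : ℝ =>
      ((Am / D) * g₁ - ((ρm : ℂ) / D) * g₂) * Complex.exp (-Ap * (t : ℂ)))
    (hwm : wm = fun t : ℝ =>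
      ((-Ap / D) * g₁ - ((ρp : ℂ) / D) * g₂) * Complex.exp (Am * (t : ℂ))) :
    D ≠ 0 ∧
    (∀ t : ℝ, (ρp : ℂ) * lam * wp t - deriv (deriv wp) t + (b : ℂ) ^ 2 * wp t = 0) ∧
    (∀ t : ℝ, (ρm : ℂ) * lam * wm t - deriv (deriv wm) t + (b : ℂ) ^ 2 * wm t = 0) ∧
    (ρp : ℂ) * wp 0 - (ρm : ℂ) * wm 0 = g₁ ∧
    deriv wp 0 - deriv wm 0 = g₂ ∧
    Filter.Tendsto wp Filter.atTop (nhds 0) ∧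
    Filter.Tendsto wm Filter.atBot (nhds 0) := by
  have hs : lam ∈ Complex.slitPlane := by
    rw [Complex.mem_slitPlane_iff_arg]
    refine ⟨fun h => ?_, hlam0⟩
    rw [h, abs_of_pos Real.pi_pos] at hlam
    linarith [hσ.1]
  have hp : 0 < Ap.re := hAp ▸ aux_re _ (aux_slit lam hs ρp b hρp)
  have hm : 0 < Am.re := hAm ▸ aux_re _ (aux_slit lam hs ρm b hρm)
  have sp : Ap ^ 2 = (ρp : ℂ) * lam + (b : ℂ) ^ 2 := by rw [hAp, aux_sq]
  have sm : Am ^ 2 = (ρm : ℂ) * lam + (b : ℂ) ^ 2 := by rw [hAm, aux_sq]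
  have hD0 : D ≠ 0 := by
    intro h
    have h1 : D.re = ρp * Am.re + ρm * Ap.re := by
      rw [hD, Complex.add_re, Complex.re_ofReal_mul, Complex.re_ofReal_mul]
    rw [h, Complex.zero_re] at h1
    have := mul_pos hρp hm
    have := mul_pos hρm hp
    linarith
  clear hAp hAm
  refine ⟨hD0, ?_, ?_, ?_, ?_, ?_, ?_⟩
  · intro t
    rw [hwp, aux_deriv, aux_deriv]
    linear_combination (-((Am / D) * g₁ - ((ρm : ℂ) / D) * g₂) * Complex.exp (-Ap * (t : ℂ))) * sp
  · intro t
    rw [hwm, aux_deriv, aux_deriv]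
    linear_combination (-((-Ap / D) * g₁ - ((ρp : ℂ) / D) * g₂) * Complex.exp (Am * (t : ℂ))) * sm
  · rw [hwp, hwm]
    simp only [Complex.ofReal_zero, mul_zero, Complex.exp_zero, mul_one]
    field_simp
    rw [hD]; ring
  · rw [hwp, hwm, aux_deriv, aux_deriv]
    simp only [Complex.ofReal_zero, mul_zero, Complex.exp_zero, mul_one]
    field_simp
    rw [hD]; ring
  · rw [hwp]
    apply aux_lim
    exact Filter.tendsto_id.const_mul_atTop_of_neg (by simpa using hp)
  · rw [hwm]
    apply aux_lim
    exact Filter.tendsto_id.const_mul_atBot hm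
end
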